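/- Let p ∈ [2, 18/5) and let (u, w, b, Π) be a smooth solution of the stationary magneto-micropolar equations on ℝ³. Then there exists a constant C > 0 (depending only on p) such that for all R > 2: ∫_{B_{R/2}} (|∇u|² + |∇b|² + |∇w|²) dx ≤ C [ R^{1 − 6/p} N² + R^{5 − 18/p} N⁶ + R^{2 − 9/p} N³ ], where N := ‖u‖_{L^p(B_{2R})} + ‖b‖_{L^p(B_{2R})} + ‖w‖_{L^p(B_{2R})}. -/

import Mathlib

/-!
Dilating by `R` reduces the estimate to the unit scale: the nonlinear terms keep their form, and
the coupling terms acquire powers of `R`. Test the energy identity with a cutoff function. The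
coupling of `u` and `w` is absorbed because `|∇u|² - |curl u|²` is a divergence when `div u = 0`.

The pressure is controlled without singular integrals. Tested against a mean-zero function, `P` may
be replaced by its difference from an average, which is an average of integrals of `∇P` along
segments from `a` to `x`. By the equation `∇P` is the divergence of a momentum flux, and one
integrates by parts in `x` on the short part of the segment near `x`, and in `a` on the rest. The
length of the short part is a free parameter: it makes the contribution of the energy from the first
part small, at the price of a large but lower-order contribution from the second.

The Sobolev inequality bounds the quartic norms by the energy and the `L²` norms. Young's inequality
then bounds the energy on a ball by half the energy on a larger ball plus powers of the `L²` norms,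
and iterating over radii removes the energy on the right-hand side. Finally, Hölder's inequality
passes from `L²` to `Lᵖ`.
-/

open MeasureTheory Real Filter Metric
open scoped Topology ENNReal

noncomputable section

/-- Three-dimensional Euclidean space. -/
abbrev E3 := EuclideanSpace ℝ (Fin 3)

/-- Partial derivative in the `i`-th coordinate direction. -/
def pd (i : Fin 3) (f : E3 → ℝ) (x : E3) : ℝ := fderiv ℝ f x (EuclideanSpace.single i 1)

/-- Laplacian of a scalar function. -/
def lap (f : E3 → ℝ) (x : E3) : ℝ := ∑ i, pd i (fun y => pd i f y) x

/-- Divergence of a vector field. -/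
def vdiv (v : E3 → E3) (x : E3) : ℝ := ∑ i, pd i (fun y => v y i) x

/-- Curl of a vector field on ℝ³. -/
def curl3 (v : E3 → E3) (x : E3) : Fin 3 → ℝ :=
  ![pd 1 (fun y => v y 2) x - pd 2 (fun y => v y 1) x,
    pd 2 (fun y => v y 0) x - pd 0 (fun y => v y 2) x,
    pd 0 (fun y => v y 1) x - pd 1 (fun y => v y 0) x]

/-- Squared norm of the full gradient of a vector field: |∇v|² = Σᵢⱼ (∂ᵢ vⱼ)². -/
def gradSq (v : E3 → E3) (x : E3) : ℝ := ∑ j, ∑ i, (pd i (fun y => v y j) x) ^ 2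

/-- The open ball of radius `r` centered at the origin. -/
def ball3 (r : ℝ) : Set E3 := Metric.ball (0 : E3) r

/-- `(u, w, b, Π)` is a smooth solution of the stationary magneto-micropolar equations on ℝ³
(with all physical constants set to 1):
−Δu + (u·∇)u + ∇Π = ∇×w + (b·∇)b; −Δw + (u·∇)w = ∇(div w) + ∇×u − 2w;
−Δb + (u·∇)b = (b·∇)u; div u = 0, div b = 0. -/
structure IsMMPSolution (u w b : E3 → E3) (P : E3 → ℝ) : Prop where
  smooth_u : ContDiff ℝ (⊤ : ℕ∞) u
  smooth_w : ContDiff ℝ (⊤ : ℕ∞) w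
  smooth_b : ContDiff ℝ (⊤ : ℕ∞) b
  smooth_P : ContDiff ℝ (⊤ : ℕ∞) P
  eq_u : ∀ x : E3, ∀ j : Fin 3,
    -(lap (fun y => u y j) x) + (∑ i, u x i * pd i (fun y => u y j) x) + pd j P x
      = curl3 w x j + ∑ i, b x i * pd i (fun y => b y j) x
  eq_w : ∀ x : E3, ∀ j : Fin 3,
    -(lap (fun y => w y j) x) + (∑ i, u x i * pd i (fun y => w y j) x)
      = pd j (fun y => vdiv w y) x + curl3 u x j - 2 * w x j
  eq_b : ∀ x : E3, ∀ j : Fin 3,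
    -(lap (fun y => b y j) x) + (∑ i, u x i * pd i (fun y => b y j) x)
      = ∑ i, b x i * pd i (fun y => u y j) x
  div_u : ∀ x : E3, vdiv u x = 0
  div_b : ∀ x : E3, vdiv b x = 0

/-- The `Lᵖ` norm of a vector field over a set `S` (for `p` a positive real). -/
def lpnorm (p : ℝ) (v : E3 → E3) (S : Set E3) : ℝ := (∫ x in S, ‖v x‖ ^ p) ^ (1 / p)

open scoped ContDiff

section PartialDerivatives

variable {f g : E3 → ℝ} {S : Set E3}

@[fun_prop]
theorem differentiable_of_contDiff_infty {E F : Type*} [NormedAddCommGroup E] [NormedSpace ℝ E]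
    [NormedAddCommGroup F] [NormedSpace ℝ F] {f : E → F} (hf : ContDiff ℝ ∞ f) :
    Differentiable ℝ f :=
  hf.differentiable (by simp)

@[fun_prop]
theorem contDiff_pd (i : Fin 3) (hf : ContDiff ℝ ∞ f) : ContDiff ℝ ∞ (pd i f) := by
  unfold pd
  exact (hf.fderiv_right (m := ∞) (by simp)).clm_apply contDiff_const

theorem pd_coord (i j : Fin 3) (x : E3) : pd i (fun y => y j) x = if i = j then 1 else 0 := by
  have h : HasFDerivAt (fun y : E3 => y j) (EuclideanSpace.proj (𝕜 := ℝ) j : E3 →L[ℝ] ℝ) x :=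
    (EuclideanSpace.proj j : E3 →L[ℝ] ℝ).hasFDerivAt
  simp [pd, h.fderiv, eq_comm]

theorem pd_const (i : Fin 3) (c : ℝ) (x : E3) : pd i (fun _ => c) x = 0 := by
  simp [pd]

theorem pd_add (i : Fin 3) (hf : Differentiable ℝ f) (hg : Differentiable ℝ g) (x : E3) :
    pd i (fun y => f y + g y) x = pd i f x + pd i g x := by
  simp [pd, fderiv_fun_add (hf x) (hg x)]

theorem pd_neg (i : Fin 3) (f : E3 → ℝ) (x : E3) : pd i (fun y => -f y) x = -pd i f x := by
  simp [pd, fderiv_fun_neg]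

theorem pd_sub (i : Fin 3) (hf : Differentiable ℝ f) (hg : Differentiable ℝ g) (x : E3) :
    pd i (fun y => f y - g y) x = pd i f x - pd i g x := by
  simp [pd, fderiv_fun_sub (hf x) (hg x)]

theorem pd_mul (i : Fin 3) (hf : Differentiable ℝ f) (hg : Differentiable ℝ g) (x : E3) :
    pd i (fun y => f y * g y) x = pd i f x * g x + f x * pd i g x := by
  simp only [pd, fderiv_fun_mul (hf x) (hg x), add_apply, smul_apply, smul_eq_mul]
  ring

theorem pd_const_mul (i : Fin 3) (c : ℝ) (hf : Differentiable ℝ f) (x : E3) :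
    pd i (fun y => c * f y) x = c * pd i f x := by
  simp [pd, fderiv_const_mul (hf x)]

theorem pd_sum {ι : Type*} (s : Finset ι) {f : ι → E3 → ℝ} (i : Fin 3)
    (hf : ∀ j, Differentiable ℝ (f j)) (x : E3) :
    pd i (fun y => ∑ j ∈ s, f j y) x = ∑ j ∈ s, pd i (f j) x := by
  simp [pd, fderiv_fun_sum fun j _ => hf j x]

theorem pd_real_comp (i : Fin 3) {h : ℝ → ℝ} (hh : Differentiable ℝ h) (hf : Differentiable ℝ f)
    (x : E3) : pd i (fun y => h (f y)) x = deriv h (f x) * pd i f x := by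
  have h : HasFDerivAt (fun y => h (f y)) _ x :=
    (hh (f x)).hasDerivAt.comp_hasFDerivAt x (hf x).hasFDerivAt
  simp [pd, h.fderiv]

theorem pd_comp_affine (i : Fin 3) (hf : Differentiable ℝ f) (t : ℝ) (c x : E3) :
    pd i (fun y => f (t • y + c)) x = t * pd i f (t • x + c) := by
  have h : HasFDerivAt (fun y => f (t • y + c)) _ x :=
    (hf (t • x + c)).hasFDerivAt.comp x (((hasFDerivAt_id x).const_smul t).add_const c)
  simp [pd, h.fderiv]

theorem pd_comm (i j : Fin 3) (hf : ContDiff ℝ 2 f) (x : E3) :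
    pd i (pd j f) x = pd j (pd i f) x := by
  have hsymm : IsSymmSndFDerivAt ℝ f x := hf.contDiffAt.isSymmSndFDerivAt (by simp)
  have hdiff : DifferentiableAt ℝ (fderiv ℝ f) x :=
    (hf.fderiv_right (m := 1) (by norm_num)).differentiable one_ne_zero x
  have key (k l : Fin 3) : pd k (pd l f) x =
      fderiv ℝ (fderiv ℝ f) x (EuclideanSpace.single k 1) (EuclideanSpace.single l 1) := by
    unfold pd
    simp [fderiv_clm_apply hdiff (differentiableAt_const _)]
  rw [key, key, hsymm.eq]

theorem fderiv_apply_eq_sum_pd (f : E3 → ℝ) (x v : E3) :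
    fderiv ℝ f x v = ∑ k, v k * pd k f x := by
  conv_lhs => rw [← (EuclideanSpace.basisFun (Fin 3) ℝ).sum_repr v]
  simp [pd]

theorem norm_fderiv_sq_le (f : E3 → ℝ) (x : E3) : ‖fderiv ℝ f x‖ ^ 2 ≤ ∑ k, pd k f x ^ 2 := by
  refine Real.le_sqrt (norm_nonneg _) (by positivity) |>.1 <|
    ContinuousLinearMap.opNorm_le_bound _ (Real.sqrt_nonneg _) fun v => ?_
  rw [fderiv_apply_eq_sum_pd, Real.norm_eq_abs, EuclideanSpace.norm_eq,
    ← Real.sqrt_mul (by positivity)]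
  refine Real.abs_le_sqrt ?_
  simpa [mul_comm] using Finset.sum_mul_sq_le_sq_mul_sq Finset.univ v.ofLp fun k => pd k f x

theorem pd_eq_zero_of_notMem_tsupport (i : Fin 3) {x : E3} (hx : x ∉ tsupport f) :
    pd i f x = 0 := by
  simp [pd, Function.notMem_support.1 fun h => hx (support_fderiv_subset ℝ h)]

theorem hasCompactSupport_pd (i : Fin 3) (hf : HasCompactSupport f) : HasCompactSupport (pd i f) :=
  hf.fderiv_apply ℝ _

theorem integral_pd_eq_zero (i : Fin 3) (hf : ContDiff ℝ 1 f) (hc : HasCompactSupport f) :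
    ∫ x, pd i f x = 0 := by
  have hpd : Integrable fun x => fderiv ℝ f x (EuclideanSpace.single i 1) :=
    (hf.continuous_fderiv_apply one_ne_zero |>.comp
      (continuous_id.prodMk continuous_const)).integrable_of_hasCompactSupport
      (hasCompactSupport_pd i hc)
  simpa [pd] using integral_mul_fderiv_eq_neg_fderiv_mul_of_integrable (𝕜 := ℝ)
    (μ := (volume : Measure E3)) (f := fun _ => (1 : ℝ)) (v := EuclideanSpace.single i 1)
    (by simp) (by simpa using hpd)
    (by simpa using hf.continuous.integrable_of_hasCompactSupport hc)
    (fun x _ => by fun_prop) (fun x _ => hf.differentiable one_ne_zero x)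

theorem setIntegral_pd_eq_zero (i : Fin 3) (hf : ContDiff ℝ 1 f) (hc : HasCompactSupport f)
    (hs : tsupport f ⊆ S) : ∫ x in S, pd i f x = 0 := by
  rw [setIntegral_eq_integral_of_forall_compl_eq_zero fun x hx =>
    pd_eq_zero_of_notMem_tsupport i fun h => hx (hs h), integral_pd_eq_zero i hf hc]

theorem setIntegral_mul_pd (i : Fin 3) (hf : ContDiff ℝ ∞ f) (hg : ContDiff ℝ ∞ g)
    (hS : IsCompact S) (hs : tsupport f ⊆ S) :
    ∫ x in S, f x * pd i g x = -∫ x in S, pd i f x * g x := by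
  have hc : HasCompactSupport f := hS.of_isClosed_subset (isClosed_tsupport f) hs
  have h := setIntegral_pd_eq_zero i (f := fun x => f x * g x)
    ((hf.mul hg).of_le (by simp)) (hc.mul_right (f' := g))
    ((tsupport_mul_subset_left (f := f) (g := g)).trans hs)
  have hint {h : E3 → ℝ} (hh : Continuous h) : IntegrableOn h S :=
    hh.continuousOn.integrableOn_compact hS
  simp_rw [pd_mul i (f := f) (g := g) (by fun_prop) (by fun_prop)] at h
  rw [integral_add (hint (by fun_prop)) (hint (by fun_prop))] at h
  linarith

end PartialDerivatives

section CompactIntegrals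

variable {X : Type*} [TopologicalSpace X] [MeasureSpace X] {K : Set X} {f g : X → ℝ} {a b : ℝ}

/-- The set `K` is compact, `f` is continuous and `‖f‖_{L¹(K)} ≤ c`. -/
structure L1Le (K : Set X) (f : X → ℝ) (c : ℝ) : Prop where
  isCompact : IsCompact K
  continuous : Continuous f
  integral_abs_le : ∫ x in K, |f x| ≤ c

/-- The set `K` is compact, `f` is continuous and `‖f‖_{L²(K)} ≤ c`. -/
structure L2Le (K : Set X) (f : X → ℝ) (c : ℝ) : Prop where
  isCompact : IsCompact K
  continuous : Continuous f
  nonneg : 0 ≤ c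
  integral_sq_le : ∫ x in K, f x ^ 2 ≤ c ^ 2

theorem L1Le.nonneg (hf : L1Le K f a) : 0 ≤ a :=
  (integral_nonneg fun _ => abs_nonneg _).trans hf.integral_abs_le

theorem L1Le.abs_integral_le (hf : L1Le K f a) : |∫ x in K, f x| ≤ a :=
  abs_integral_le_integral_abs.trans hf.integral_abs_le

theorem L1Le.mono (hf : L1Le K f a) (h : a ≤ b) : L1Le K f b :=
  ⟨hf.isCompact, hf.continuous, hf.integral_abs_le.trans h⟩

theorem L2Le.mono (hf : L2Le K f a) (h : a ≤ b) : L2Le K f b :=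
  ⟨hf.isCompact, hf.continuous, hf.nonneg.trans h,
    hf.integral_sq_le.trans (pow_le_pow_left₀ hf.nonneg h 2)⟩

variable [T2Space X] [BorelSpace X] [IsFiniteMeasureOnCompacts (volume : Measure X)]

theorem integrableOn_of_isCompact (hK : IsCompact K) (hf : Continuous f) : IntegrableOn f K :=
  hf.continuousOn.integrableOn_compact hK

theorem setIntegral_mono_of_isCompact (hK : IsCompact K) (hf : Continuous f) (hg : Continuous g)
    (h : ∀ x ∈ K, f x ≤ g x) : ∫ x in K, f x ≤ ∫ x in K, g x :=
  setIntegral_mono_on (integrableOn_of_isCompact hK hf) (integrableOn_of_isCompact hK hg)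
    hK.measurableSet h

theorem setIntegral_mono_set_of_isCompact {K' : Set X} (hK : IsCompact K) (hf : Continuous f)
    (hf0 : ∀ x, 0 ≤ f x) (h : K' ⊆ K) : ∫ x in K', f x ≤ ∫ x in K, f x :=
  setIntegral_mono_set (integrableOn_of_isCompact hK hf) (.of_forall hf0) h.eventuallyLE

namespace L1Le

theorem of_abs_le (hg : L1Le K g a) (hf : Continuous f) (h : ∀ x ∈ K, |f x| ≤ |g x|) :
    L1Le K f a :=
  ⟨hg.isCompact, hf, (setIntegral_mono_of_isCompact hg.isCompact hf.abs hg.continuous.abs h).trans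
    hg.integral_abs_le⟩

theorem neg (hf : L1Le K f a) : L1Le K (fun x => -f x) a :=
  hf.of_abs_le hf.continuous.neg fun _ _ => (abs_neg _).le

theorem add (hf : L1Le K f a) (hg : L1Le K g b) : L1Le K (fun x => f x + g x) (a + b) := by
  have hf' := hf.continuous
  have hg' := hg.continuous
  refine ⟨hf.isCompact, by fun_prop, ?_⟩
  calc ∫ x in K, |f x + g x| ≤ ∫ x in K, (|f x| + |g x|) :=
        setIntegral_mono_of_isCompact hf.isCompact (by fun_prop) (by fun_prop)
          fun x _ => abs_add_le _ _
    _ = (∫ x in K, |f x|) + ∫ x in K, |g x| :=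
        integral_add (integrableOn_of_isCompact hf.isCompact (by fun_prop))
          (integrableOn_of_isCompact hf.isCompact (by fun_prop))
    _ ≤ a + b := add_le_add hf.integral_abs_le hg.integral_abs_le

theorem sub (hf : L1Le K f a) (hg : L1Le K g b) : L1Le K (fun x => f x - g x) (a + b) := by
  simpa only [sub_eq_add_neg] using hf.add hg.neg

theorem sum {ι : Type*} {s : Finset ι} {f : ι → X → ℝ} {a : ι → ℝ} (hK : IsCompact K)
    (hf : ∀ i ∈ s, L1Le K (f i) (a i)) : L1Le K (fun x => ∑ i ∈ s, f i x) (∑ i ∈ s, a i) := by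
  induction s using Finset.cons_induction with
  | empty => exact ⟨hK, by simp only [Finset.sum_empty, continuous_const], by simp⟩
  | cons i s hi ih =>
    simp only [Finset.sum_cons, Finset.forall_mem_cons] at hf ⊢
    exact hf.1.add (ih hf.2)

theorem bdd_mul (hf : L1Le K f a) (hg : Continuous g) (hb : ∀ x ∈ K, |g x| ≤ b) (hb0 : 0 ≤ b) :
    L1Le K (fun x => g x * f x) (b * a) := by
  have hf' := hf.continuous
  refine ⟨hf.isCompact, by fun_prop, ?_⟩
  calc ∫ x in K, |g x * f x| ≤ ∫ x in K, b * |f x| :=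
        setIntegral_mono_of_isCompact hf.isCompact (by fun_prop) (by fun_prop) fun x hx => by
          rw [abs_mul]
          exact mul_le_mul_of_nonneg_right (hb x hx) (abs_nonneg _)
    _ = b * ∫ x in K, |f x| := integral_const_mul _ _
    _ ≤ b * a := mul_le_mul_of_nonneg_left hf.integral_abs_le hb0

theorem const_mul (hf : L1Le K f a) (c : ℝ) : L1Le K (fun x => c * f x) (|c| * a) :=
  hf.bdd_mul continuous_const (fun _ _ => le_rfl) (abs_nonneg c)

end L1Le

namespace L2Le

theorem of_abs_le (hg : L2Le K g a) (hf : Continuous f) (h : ∀ x ∈ K, |f x| ≤ |g x|) :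
    L2Le K f a :=
  ⟨hg.isCompact, hf, hg.nonneg, (setIntegral_mono_of_isCompact hg.isCompact (hf.pow 2)
    (hg.continuous.pow 2) fun x hx => sq_le_sq.2 (h x hx)).trans hg.integral_sq_le⟩

theorem of_sq_le (hK : IsCompact K) (hf : Continuous f) (hg : Continuous g)
    (h : ∀ x ∈ K, f x ^ 2 ≤ g x) (ha : 0 ≤ a) (hga : ∫ x in K, g x ≤ a ^ 2) : L2Le K f a :=
  ⟨hK, hf, ha, (setIntegral_mono_of_isCompact hK (hf.pow 2) hg h).trans hga⟩

theorem mono_set {K' : Set X} (hf : L2Le K f a) (hK' : IsCompact K') (h : K' ⊆ K) :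
    L2Le K' f a :=
  ⟨hK', hf.continuous, hf.nonneg, (setIntegral_mono_set_of_isCompact hf.isCompact
    (hf.continuous.pow 2) (fun _ => sq_nonneg _) h).trans hf.integral_sq_le⟩

theorem neg (hf : L2Le K f a) : L2Le K (fun x => -f x) a :=
  hf.of_abs_le hf.continuous.neg fun _ _ => (abs_neg _).le

theorem integral_abs_mul_abs_le (hf : L2Le K f a) (hg : L2Le K g b) :
    ∫ x in K, |f x| * |g x| ≤ a * b := by
  have memLp {h : X → ℝ} (hh : Continuous h) : MemLp h (ENNReal.ofReal 2) (volume.restrict K) := by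
    rw [ENNReal.ofReal_ofNat]
    exact (memLp_two_iff_integrable_sq hh.aestronglyMeasurable).2
      (integrableOn_of_isCompact hf.isCompact (hh.pow 2))
  have h := integral_mul_norm_le_Lp_mul_Lq Real.HolderConjugate.two_two
    (memLp hf.continuous) (memLp hg.continuous)
  simp only [Real.norm_eq_abs, rpow_two, sq_abs, ← Real.sqrt_eq_rpow] at h
  exact h.trans (mul_le_mul (Real.sqrt_le_iff.2 ⟨hf.nonneg, hf.integral_sq_le⟩)
    (Real.sqrt_le_iff.2 ⟨hg.nonneg, hg.integral_sq_le⟩) (Real.sqrt_nonneg _) hf.nonneg)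

theorem mul (hf : L2Le K f a) (hg : L2Le K g b) : L1Le K (fun x => f x * g x) (a * b) :=
  ⟨hf.isCompact, hf.continuous.mul hg.continuous, by
    simpa only [abs_mul] using hf.integral_abs_mul_abs_le hg⟩

theorem add (hf : L2Le K f a) (hg : L2Le K g b) : L2Le K (fun x => f x + g x) (a + b) := by
  have hf' := hf.continuous
  have hg' := hg.continuous
  have hint {h : X → ℝ} (hh : Continuous h) : IntegrableOn h K :=
    integrableOn_of_isCompact hf.isCompact hh
  refine ⟨hf.isCompact, by fun_prop, add_nonneg hf.nonneg hg.nonneg, ?_⟩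
  calc ∫ x in K, (f x + g x) ^ 2 = ∫ x in K, (f x ^ 2 + 2 * (f x * g x) + g x ^ 2) := by
        congr with x; ring
    _ = (∫ x in K, f x ^ 2) + 2 * (∫ x in K, f x * g x) + ∫ x in K, g x ^ 2 := by
        rw [integral_add (hint (by fun_prop)) (hint (by fun_prop)),
          integral_add (hint (by fun_prop)) (hint (by fun_prop)), integral_const_mul]
    _ ≤ a ^ 2 + 2 * (a * b) + b ^ 2 := by
        gcongr
        exacts [hf.integral_sq_le, (le_abs_self _).trans (hf.mul hg).abs_integral_le,
          hg.integral_sq_le]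
    _ = (a + b) ^ 2 := by ring

theorem sub (hf : L2Le K f a) (hg : L2Le K g b) : L2Le K (fun x => f x - g x) (a + b) := by
  simpa only [sub_eq_add_neg] using hf.add hg.neg

theorem sum {ι : Type*} {s : Finset ι} {f : ι → X → ℝ} {a : ι → ℝ} (hK : IsCompact K)
    (hf : ∀ i ∈ s, L2Le K (f i) (a i)) : L2Le K (fun x => ∑ i ∈ s, f i x) (∑ i ∈ s, a i) := by
  induction s using Finset.cons_induction with
  | empty => exact ⟨hK, by simp only [Finset.sum_empty, continuous_const], by simp, by simp⟩
  | cons i s hi ih =>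
    simp only [Finset.sum_cons, Finset.forall_mem_cons] at hf ⊢
    exact hf.1.add (ih hf.2)

theorem bdd_mul (hf : L2Le K f a) (hg : Continuous g) (hb : ∀ x ∈ K, |g x| ≤ b) (hb0 : 0 ≤ b) :
    L2Le K (fun x => g x * f x) (b * a) := by
  have hf' := hf.continuous
  refine ⟨hf.isCompact, by fun_prop, mul_nonneg hb0 hf.nonneg, ?_⟩
  calc ∫ x in K, (g x * f x) ^ 2 ≤ ∫ x in K, b ^ 2 * f x ^ 2 :=
        setIntegral_mono_of_isCompact hf.isCompact (by fun_prop) (by fun_prop) fun x hx => by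
          rw [mul_pow]
          exact mul_le_mul_of_nonneg_right (sq_le_sq.2 ((hb x hx).trans (le_abs_self b)))
            (sq_nonneg _)
    _ = b ^ 2 * ∫ x in K, f x ^ 2 := integral_const_mul _ _
    _ ≤ (b * a) ^ 2 := by
        rw [mul_pow]
        exact mul_le_mul_of_nonneg_left hf.integral_sq_le (sq_nonneg _)

theorem const_mul (hf : L2Le K f a) (c : ℝ) : L2Le K (fun x => c * f x) (|c| * a) :=
  hf.bdd_mul continuous_const (fun _ _ => le_rfl) (abs_nonneg c)

end L2Le

end CompactIntegrals

section CompactProducts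

variable {X Y : Type*} [TopologicalSpace X] [T2Space X] [MeasureSpace X]
  [SFinite (volume : Measure X)] [TopologicalSpace Y] [T2Space Y] [MeasureSpace Y]
  [SFinite (volume : Measure Y)] [BorelSpace (X × Y)]
  [IsFiniteMeasureOnCompacts (volume : Measure (X × Y))] {K : Set X} {L : Set Y}

theorem setIntegral_prod_of_isCompact (hK : IsCompact K) (hL : IsCompact L) {f : X × Y → ℝ}
    (hf : Continuous f) : ∫ z in K ×ˢ L, f z = ∫ x in K, ∫ y in L, f (x, y) :=
  setIntegral_prod f (integrableOn_of_isCompact (hK.prod hL) hf)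

theorem setIntegral_swap_of_isCompact (hK : IsCompact K) (hL : IsCompact L) {f : X → Y → ℝ}
    (hf : Continuous f.uncurry) :
    ∫ x in K, ∫ y in L, f x y = ∫ y in L, ∫ x in K, f x y := by
  refine integral_integral_swap ?_
  rw [Measure.prod_restrict]
  exact integrableOn_of_isCompact (hK.prod hL) hf

theorem intervalIntegral_setIntegral_swap_of_isCompact {a b : ℝ} (hab : a ≤ b)
    [BorelSpace (ℝ × Y)] [IsFiniteMeasureOnCompacts (volume : Measure (ℝ × Y))]
    (hL : IsCompact L) {f : ℝ → Y → ℝ} (hf : Continuous f.uncurry) :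
    ∫ t in a..b, ∫ y in L, f t y = ∫ y in L, ∫ t in a..b, f t y := by
  simp_rw [intervalIntegral.integral_of_le hab, ← integral_Icc_eq_integral_Ioc]
  exact setIntegral_swap_of_isCompact isCompact_Icc hL hf

end CompactProducts

theorem setIntegral_comp_affine_le {E : Type*} [NormedAddCommGroup E] [NormedSpace ℝ E]
    [FiniteDimensional ℝ E] [MeasurableSpace E] [BorelSpace E] {μ : Measure E}
    [μ.IsAddHaarMeasure] {S T : Set E} {h : E → ℝ} (hS : MeasurableSet S) (hT : MeasurableSet T)
    (hh : IntegrableOn h T μ) (hh0 : ∀ x, 0 ≤ h x) {t : ℝ} (ht : 0 < t) (c : E)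
    (hmaps : Set.MapsTo (fun x => t • x + c) S T) :
    ∫ x in S, h (t • x + c) ∂μ ≤ (t ^ Module.finrank ℝ E)⁻¹ * ∫ y in T, h y ∂μ := by
  have hint : Integrable (T.indicator h) μ := (integrable_indicator_iff hT).2 hh
  have hchange : ∫ x, T.indicator h (t • x + c) ∂μ
      = (t ^ Module.finrank ℝ E)⁻¹ * ∫ y in T, h y ∂μ := by
    rw [Measure.integral_comp_smul μ (fun z => T.indicator h (z + c)) t,
      integral_add_right_eq_self _ c, integral_indicator hT]
    simp [abs_of_pos ht]
  rw [← hchange, ← integral_indicator hS]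
  refine integral_mono_of_nonneg (.of_forall fun x => Set.indicator_nonneg (fun _ _ => hh0 _) x)
    ((hint.comp_add_right c).comp_smul ht.ne') (.of_forall fun x => ?_)
  by_cases hx : x ∈ S
  · simp [hx, Set.indicator_of_mem (hmaps hx)]
  · simpa [hx] using Set.indicator_nonneg (fun _ _ => hh0 _) _

section SegmentPairing

variable {S : Set E3} {ρ f g F P : E3 → ℝ} {L t : ℝ} {j k : Fin 3}

/-- A smooth probability density `ρ` supported in `S`. The number `L` bounds the derivatives in `a`
of `ρ(a) (xₖ - aₖ)` for `x ∈ S`: this is what integrating by parts in the centre `a` costs. -/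
structure IsAveragingWeight (S : Set E3) (ρ : E3 → ℝ) (L : ℝ) : Prop where
  contDiff : ContDiff ℝ ∞ ρ
  nonneg : ∀ a, 0 ≤ ρ a
  tsupport_subset : tsupport ρ ⊆ S
  integral_eq_one : ∫ a in S, ρ a = 1
  abs_pd_le : ∀ x ∈ S, ∀ a k j, |pd j (fun y => ρ y * (x k - y k)) a| ≤ L

theorem IsAveragingWeight.bound_nonneg (hρ : IsAveragingWeight S ρ L) : 0 ≤ L := by
  obtain ⟨x, hx⟩ : S.Nonempty := Set.nonempty_iff_ne_empty.2 fun h => by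
    simpa [h] using hρ.integral_eq_one
  exact (abs_nonneg _).trans (hρ.abs_pd_le x hx x 0 0)

/-- The pairing of `g` with the average over `a`, with weight `ρ`, of `(xₖ - aₖ) f(tx + (1 - t)a)`.
For `f = ∂ₖP`, integrating over `t ∈ [0, 1]` and summing over `k` recovers the pairing of `g` with
`P` minus its average. -/
def segmentPairing (S : Set E3) (ρ g : E3 → ℝ) (k : Fin 3) (f : E3 → ℝ) (t : ℝ) : ℝ :=
  ∫ z in S ×ˢ S, ρ z.2 * (g z.1 * ((z.1 k - z.2 k) * f (t • z.1 + (1 - t) • z.2)))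

theorem abs_coord_le_norm (x : E3) (k : Fin 3) : |x k| ≤ ‖x‖ := by
  simpa using PiLp.norm_apply_le x k

theorem continuous_segmentPairing (hS : IsCompact S) (hρ : Continuous ρ) (hg : Continuous g)
    (hf : Continuous f) : Continuous (segmentPairing S ρ g k f) :=
  continuous_parametric_integral_of_continuous (by unfold Function.uncurry; fun_prop) (hS.prod hS)

theorem segmentPairing_eq_integral_left (hS : IsCompact S) (hρ : Continuous ρ) (hg : Continuous g)
    (hf : Continuous f) : segmentPairing S ρ g k f t =
      ∫ x in S, g x * ∫ a in S, ρ a * (x k - a k) * f (t • x + (1 - t) • a) := by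
  rw [segmentPairing, setIntegral_prod_of_isCompact hS hS (by fun_prop)]
  simp_rw [← integral_const_mul]
  congr with x
  congr with a
  ring

theorem segmentPairing_eq_integral_right (hS : IsCompact S) (hρ : Continuous ρ) (hg : Continuous g)
    (hf : Continuous f) : segmentPairing S ρ g k f t =
      ∫ a in S, ρ a * ∫ x in S, g x * (x k - a k) * f (t • x + (1 - t) • a) := by
  rw [segmentPairing, setIntegral_prod_of_isCompact hS hS (by fun_prop),
    setIntegral_swap_of_isCompact hS hS (by unfold Function.uncurry; fun_prop)]
  simp_rw [integral_const_mul, mul_assoc]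

theorem integral_segmentPairing_add (hS : IsCompact S) (hρ : Continuous ρ) (hg : Continuous g)
    {f₁ f₂ : E3 → ℝ} (hf₁ : Continuous f₁) (hf₂ : Continuous f₂) :
    ∫ t in (0 : ℝ)..1, segmentPairing S ρ g k (fun x => f₁ x + f₂ x) t =
      (∫ t in (0 : ℝ)..1, segmentPairing S ρ g k f₁ t) +
        ∫ t in (0 : ℝ)..1, segmentPairing S ρ g k f₂ t := by
  rw [← intervalIntegral.integral_add
    ((continuous_segmentPairing hS hρ hg hf₁).intervalIntegrable _ _)
    ((continuous_segmentPairing hS hρ hg hf₂).intervalIntegrable _ _)]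
  congr with t
  simp only [segmentPairing, mul_add]
  exact integral_add (integrableOn_of_isCompact (hS.prod hS) (by fun_prop))
    (integrableOn_of_isCompact (hS.prod hS) (by fun_prop))

theorem integral_segmentPairing_sum (hS : IsCompact S) (hρ : Continuous ρ) (hg : Continuous g)
    {ι : Type*} (s : Finset ι) {f : ι → E3 → ℝ} (hf : ∀ i, Continuous (f i)) :
    ∫ t in (0 : ℝ)..1, segmentPairing S ρ g k (fun x => ∑ i ∈ s, f i x) t =
      ∑ i ∈ s, ∫ t in (0 : ℝ)..1, segmentPairing S ρ g k (f i) t := by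
  induction s using Finset.cons_induction with
  | empty => simp [segmentPairing]
  | cons i s hi ih =>
    simp only [Finset.sum_cons]
    rw [integral_segmentPairing_add hS hρ hg (hf i) (by fun_prop), ih]

theorem sub_eq_intervalIntegral_pd (hP : ContDiff ℝ ∞ P) (x a : E3) :
    P x - P a = ∫ t in (0 : ℝ)..1, ∑ k, (x k - a k) * pd k P (t • x + (1 - t) • a) := by
  have hderiv (t : ℝ) : HasDerivAt (fun s : ℝ => P (s • x + (1 - s) • a))
      (∑ k, (x k - a k) * pd k P (t • x + (1 - t) • a)) t := by
    have hseg : HasDerivAt (fun s : ℝ => s • x + (1 - s) • a) (x - a) t := by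
      simpa [sub_eq_add_neg] using ((hasDerivAt_id t).smul_const x).fun_add
        (((hasDerivAt_id t).const_sub 1).smul_const a)
    have h := (differentiable_of_contDiff_infty hP _).hasFDerivAt.comp_hasDerivAt t hseg
    rwa [fderiv_apply_eq_sum_pd] at h
  rw [intervalIntegral.integral_eq_sub_of_hasDerivAt (fun t _ => hderiv t)
    (Continuous.intervalIntegrable (by fun_prop) _ _)]
  simp

theorem setIntegral_mul_eq_sum_segmentPairing (hS : IsCompact S) (hρ : IsAveragingWeight S ρ L)
    (hg : Continuous g) (hg0 : ∫ x in S, g x = 0) (hP : ContDiff ℝ ∞ P) :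
    ∫ x in S, P x * g x = ∑ k, ∫ t in (0 : ℝ)..1, segmentPairing S ρ g k (pd k P) t := by
  have hρc := hρ.contDiff.continuous
  have hPc := hP.continuous
  have hint {h : E3 × E3 → ℝ} (hh : Continuous h) : IntegrableOn h (S ×ˢ S) :=
    integrableOn_of_isCompact (hS.prod hS) hh
  have hswap : ∑ k, ∫ t in (0 : ℝ)..1, segmentPairing S ρ g k (pd k P) t =
      ∫ z in S ×ˢ S, ρ z.2 * (g z.1 * (P z.1 - P z.2)) := by
    simp_rw [segmentPairing]
    rw [Finset.sum_congr rfl fun k _ => intervalIntegral_setIntegral_swap_of_isCompact zero_le_one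
      (hS.prod hS) (by unfold Function.uncurry; fun_prop), ← integral_finsetSum _ fun k _ => hint
        (intervalIntegral.continuous_parametric_intervalIntegral_of_continuous'
          (by unfold Function.uncurry; fun_prop) _ _)]
    congr with z
    rw [sub_eq_intervalIntegral_pd hP, intervalIntegral.integral_finsetSum fun k _ =>
      Continuous.intervalIntegrable (by fun_prop) _ _, Finset.mul_sum, Finset.mul_sum]
    simp_rw [intervalIntegral.integral_const_mul]
  have hsplit (z : E3 × E3) : ρ z.2 * (g z.1 * (P z.1 - P z.2)) =
      P z.1 * g z.1 * ρ z.2 - g z.1 * (ρ z.2 * P z.2) := by ring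
  simp_rw [hswap, hsplit]
  rw [integral_sub (hint (by fun_prop)) (hint (by fun_prop))]
  rw [Measure.volume_eq_prod, setIntegral_prod_mul (fun x => P x * g x) ρ,
    setIntegral_prod_mul g fun a => ρ a * P a, hρ.integral_eq_one, hg0]
  ring

end SegmentPairing

section SegmentPairingBounds

variable {S : Set E3} {ρ f g F : E3 → ℝ} {L G F₁ D F₂ c t q : ℝ} {j k : Fin 3} {x a : E3}

theorem inv_pow_three_le_eight (ht : 1 / 2 ≤ t) : (t ^ 3)⁻¹ ≤ 8 := by
  rw [show (8 : ℝ) = ((1 / 2) ^ 3)⁻¹ by norm_num]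
  gcongr

theorem setIntegral_segment_le_left (hS : IsCompact S) (hconv : Convex ℝ S) (hf : Continuous f)
    (hf0 : ∀ y, 0 ≤ f y) (ht0 : 0 < t) (ht1 : t ≤ 1) (ha : a ∈ S) :
    ∫ x in S, f (t • x + (1 - t) • a) ≤ (t ^ 3)⁻¹ * ∫ y in S, f y := by
  simpa using setIntegral_comp_affine_le hS.measurableSet hS.measurableSet
    (integrableOn_of_isCompact hS hf) hf0 ht0 ((1 - t) • a)
    fun x hx => hconv hx ha ht0.le (sub_nonneg.2 ht1) (by ring)

theorem setIntegral_segment_le_right (hS : IsCompact S) (hconv : Convex ℝ S) (hf : Continuous f)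
    (hf0 : ∀ y, 0 ≤ f y) (ht0 : 0 ≤ t) (ht1 : t < 1) (hx : x ∈ S) :
    ∫ a in S, f (t • x + (1 - t) • a) ≤ ((1 - t) ^ 3)⁻¹ * ∫ y in S, f y := by
  simpa [add_comm] using setIntegral_segment_le_left hS hconv hf hf0 (sub_pos.2 ht1)
    (sub_le_self 1 ht0) hx

theorem setIntegral_setIntegral_segment_le (hS : IsCompact S) (hconv : Convex ℝ S)
    (hf : Continuous f) (hf0 : ∀ y, 0 ≤ f y) (ht0 : 0 ≤ t) (ht1 : t < 1) :
    ∫ x in S, ∫ a in S, f (t • x + (1 - t) • a) ≤ volume.real S * (8 * ∫ y in S, f y) := by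
  have hI : 0 ≤ ∫ y in S, f y := integral_nonneg hf0
  rw [← smul_eq_mul (volume.real S), ← setIntegral_const]
  rcases le_total t (1 / 2) with ht | ht
  · refine setIntegral_mono_of_isCompact hS (continuous_parametric_integral_of_continuous
      (by unfold Function.uncurry; fun_prop) hS) continuous_const fun x hx =>
      (setIntegral_segment_le_right hS hconv hf hf0 ht0 ht1 hx).trans ?_
    exact mul_le_mul_of_nonneg_right (inv_pow_three_le_eight (by linarith)) hI
  · rw [setIntegral_swap_of_isCompact hS hS (by unfold Function.uncurry; fun_prop)]
    refine setIntegral_mono_of_isCompact hS (continuous_parametric_integral_of_continuous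
      (by unfold Function.uncurry; fun_prop) hS) continuous_const fun a ha =>
      (setIntegral_segment_le_left hS hconv hf hf0 (by linarith) ht1.le ha).trans ?_
    exact mul_le_mul_of_nonneg_right (inv_pow_three_le_eight ht) hI

theorem L2Le.comp_segment (hF : L2Le S F c) (hconv : Convex ℝ S) (ht : 1 / 2 ≤ t) (ht1 : t ≤ 1)
    (ha : a ∈ S) : L2Le S (fun x => F (t • x + (1 - t) • a)) (3 * c) := by
  have hFc := hF.continuous
  have hc := hF.nonneg
  refine ⟨hF.isCompact, by fun_prop, by positivity, ?_⟩
  calc ∫ x in S, F (t • x + (1 - t) • a) ^ 2 ≤ (t ^ 3)⁻¹ * ∫ y in S, F y ^ 2 :=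
        setIntegral_segment_le_left hF.isCompact hconv (hFc.pow 2) (fun _ => sq_nonneg _)
          (by linarith) ht1 ha
    _ ≤ 8 * c ^ 2 := mul_le_mul (inv_pow_three_le_eight ht) hF.integral_sq_le
        (integral_nonneg fun _ => sq_nonneg _) (by norm_num)
    _ ≤ (3 * c) ^ 2 := by nlinarith [sq_nonneg c]

theorem abs_setIntegral_mul_pd_segment_le (hconv : Convex ℝ S) (hg : ContDiff ℝ ∞ g)
    (hgs : tsupport g ⊆ S) (hF : ContDiff ℝ ∞ F) (ha : a ∈ S)
    (hD : L2Le S (pd j fun y => g y * (y k - a k)) D) (hF₂ : L2Le S F F₂)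
    (ht : 1 / 2 ≤ t) (ht1 : t ≤ 1) :
    |∫ x in S, g x * (x k - a k) * pd j F (t • x + (1 - t) • a)| ≤ 6 * (D * F₂) := by
  have hibp := setIntegral_mul_pd (f := fun y => g y * (y k - a k))
    (g := fun y => F (t • y + (1 - t) • a)) j (by fun_prop) (by fun_prop) hD.isCompact
    ((tsupport_mul_subset_left (f := g) (g := fun y => y k - a k)).trans hgs)
  simp_rw [pd_comp_affine j (differentiable_of_contDiff_infty hF), mul_left_comm _ t] at hibp
  rw [integral_const_mul] at hibp
  have h := (hD.mul (hF₂.comp_segment hconv ht ht1 ha)).abs_integral_le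
  rw [← abs_neg, ← hibp, abs_mul, abs_of_nonneg (by linarith)] at h
  nlinarith [abs_nonneg (∫ x in S, g x * (x k - a k) * pd j F (t • x + (1 - t) • a))]

theorem abs_segmentPairing_pd_le_near_one (hconv : Convex ℝ S) (hρ : IsAveragingWeight S ρ L)
    (hg : ContDiff ℝ ∞ g) (hgs : tsupport g ⊆ S) (hF : ContDiff ℝ ∞ F)
    (hD : ∀ a ∈ S, L2Le S (pd j fun y => g y * (y k - a k)) D) (hF₂ : L2Le S F F₂)
    (ht : 1 / 2 ≤ t) (ht1 : t ≤ 1) : |segmentPairing S ρ g k (pd j F) t| ≤ 6 * (D * F₂) := by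
  have hS := hF₂.isCompact
  have hρc := hρ.contDiff.continuous
  have hinner : Continuous fun a => ∫ x in S, g x * (x k - a k) * pd j F (t • x + (1 - t) • a) :=
    continuous_parametric_integral_of_continuous (by unfold Function.uncurry; fun_prop) hS
  rw [segmentPairing_eq_integral_right hS hρc hg.continuous (by fun_prop)]
  calc _ ≤ ∫ a in S, |ρ a * ∫ x in S, g x * (x k - a k) * pd j F (t • x + (1 - t) • a)| :=
        abs_integral_le_integral_abs
    _ ≤ ∫ a in S, ρ a * (6 * (D * F₂)) :=
        setIntegral_mono_of_isCompact hS (by fun_prop) (by fun_prop) fun a ha => by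
          rw [abs_mul, abs_of_nonneg (hρ.nonneg a)]
          exact mul_le_mul_of_nonneg_left (abs_setIntegral_mul_pd_segment_le hconv hg hgs hF ha
            (hD a ha) hF₂ ht ht1) (hρ.nonneg a)
    _ = 6 * (D * F₂) := by rw [integral_mul_const, hρ.integral_eq_one, one_mul]

theorem abs_setIntegral_weight_mul_pd_segment_le (hS : IsCompact S) (hρ : IsAveragingWeight S ρ L)
    (hF : ContDiff ℝ ∞ F) (ht1 : t < 1) (hx : x ∈ S) :
    |∫ a in S, ρ a * (x k - a k) * pd j F (t • x + (1 - t) • a)| ≤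
      (1 - t)⁻¹ * (L * ∫ a in S, |F (t • x + (1 - t) • a)|) := by
  have hρs := hρ.contDiff
  have hFc := hF.continuous
  have hibp := setIntegral_mul_pd (f := fun a => ρ a * (x k - a k))
    (g := fun a => F ((1 - t) • a + t • x)) j (by fun_prop) (by fun_prop) hS
    ((tsupport_mul_subset_left (f := ρ) (g := fun a => x k - a k)).trans hρ.tsupport_subset)
  simp_rw [pd_comp_affine j (differentiable_of_contDiff_infty hF), mul_left_comm _ (1 - t),
    add_comm _ (t • x)] at hibp
  rw [integral_const_mul] at hibp
  have hF₁ : L1Le S (fun a => F (t • x + (1 - t) • a)) (∫ a in S, |F (t • x + (1 - t) • a)|) :=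
    ⟨hS, by fun_prop, le_rfl⟩
  have h := (hF₁.bdd_mul (by fun_prop) (fun a _ => hρ.abs_pd_le x hx a k j)
    hρ.bound_nonneg).abs_integral_le
  rwa [← abs_neg, ← hibp, abs_mul, abs_of_pos (sub_pos.2 ht1), ← le_inv_mul_iff₀ (sub_pos.2 ht1)]
    at h

theorem L1Le.l2Le_integral_segment (hF : L1Le S F F₁) (hconv : Convex ℝ S) (ht0 : 0 ≤ t)
    (ht1 : t < 1) : L2Le S (fun x => ∫ a in S, |F (t • x + (1 - t) • a)|)
      (√(8 * volume.real S) * ((1 - t) ^ (-(3 / 2) : ℝ) * F₁)) := by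
  have hS := hF.isCompact
  have hFc := hF.continuous
  have hF₁ := hF.nonneg
  have ht : 0 < 1 - t := sub_pos.2 ht1
  have hcont : Continuous fun x => ∫ a in S, |F (t • x + (1 - t) • a)| :=
    continuous_parametric_integral_of_continuous (by unfold Function.uncurry; fun_prop) hS
  have hsup : ∀ x ∈ S, ∫ a in S, |F (t • x + (1 - t) • a)| ≤ ((1 - t) ^ 3)⁻¹ * F₁ := fun x hx =>
    (setIntegral_segment_le_right hS hconv hFc.abs (fun _ => abs_nonneg _) ht0 ht1 hx).trans
      (mul_le_mul_of_nonneg_left hF.integral_abs_le (by positivity))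
  have hint : ∫ x in S, ∫ a in S, |F (t • x + (1 - t) • a)| ≤ volume.real S * (8 * F₁) :=
    (setIntegral_setIntegral_segment_le hS hconv hFc.abs (fun _ => abs_nonneg _) ht0 ht1).trans
      (by gcongr; exact hF.integral_abs_le)
  have hpow : ((1 - t) ^ (-(3 / 2) : ℝ)) ^ 2 = ((1 - t) ^ 3)⁻¹ := by
    rw [← rpow_mul_natCast ht.le, ← rpow_natCast, ← rpow_neg ht.le]
    norm_num
  refine ⟨hS, hcont, by positivity, ?_⟩
  calc ∫ x in S, (∫ a in S, |F (t • x + (1 - t) • a)|) ^ 2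
      ≤ ∫ x in S, ((1 - t) ^ 3)⁻¹ * F₁ * ∫ a in S, |F (t • x + (1 - t) • a)| :=
        setIntegral_mono_of_isCompact hS (by fun_prop) (by fun_prop) fun x hx => by
          rw [sq]
          exact mul_le_mul_of_nonneg_right (hsup x hx) (integral_nonneg fun _ => abs_nonneg _)
    _ = ((1 - t) ^ 3)⁻¹ * F₁ * ∫ x in S, ∫ a in S, |F (t • x + (1 - t) • a)| :=
        integral_const_mul _ _
    _ ≤ ((1 - t) ^ 3)⁻¹ * F₁ * (volume.real S * (8 * F₁)) := by gcongr
    _ = (√(8 * volume.real S) * ((1 - t) ^ (-(3 / 2) : ℝ) * F₁)) ^ 2 := by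
        rw [mul_pow, mul_pow, hpow, Real.sq_sqrt (by positivity)]
        ring

theorem abs_segmentPairing_pd_le_rpow (hconv : Convex ℝ S) (hρ : IsAveragingWeight S ρ L)
    (hF : ContDiff ℝ ∞ F) (hG : L2Le S g G) (hF₁ : L1Le S F F₁) (ht0 : 0 ≤ t) (ht1 : t < 1) :
    |segmentPairing S ρ g k (pd j F) t| ≤
      L * √(8 * volume.real S) * (G * F₁) * (1 - t) ^ (-(5 / 2) : ℝ) := by
  have hS := hG.isCompact
  have hgc := hG.continuous
  have hρc := hρ.contDiff.continuous
  have ht : 0 < 1 - t := sub_pos.2 ht1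
  have hΦ := hF₁.l2Le_integral_segment hconv ht0 ht1
  have hΦc := hΦ.continuous
  have hinner : Continuous fun x => ∫ a in S, ρ a * (x k - a k) * pd j F (t • x + (1 - t) • a) :=
    continuous_parametric_integral_of_continuous (by unfold Function.uncurry; fun_prop) hS
  have hL := hρ.bound_nonneg
  have hpow : (1 - t) ^ (-(5 / 2) : ℝ) = (1 - t)⁻¹ * (1 - t) ^ (-(3 / 2) : ℝ) := by
    rw [← rpow_neg_one, ← rpow_add ht]
    norm_num
  rw [segmentPairing_eq_integral_left hS hρc hgc (by fun_prop)]
  calc _ ≤ ∫ x in S, |g x * ∫ a in S, ρ a * (x k - a k) * pd j F (t • x + (1 - t) • a)| :=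
        abs_integral_le_integral_abs
    _ ≤ ∫ x in S, (1 - t)⁻¹ * L * (|g x| * |(∫ a in S, |F (t • x + (1 - t) • a)|)|) :=
        setIntegral_mono_of_isCompact hS (by fun_prop) (by fun_prop) fun x hx => by
          rw [abs_mul, abs_of_nonneg (integral_nonneg fun _ => abs_nonneg _), mul_left_comm,
            mul_assoc (1 - t)⁻¹]
          exact mul_le_mul_of_nonneg_left
            (abs_setIntegral_weight_mul_pd_segment_le hS hρ hF ht1 hx) (abs_nonneg _)
    _ ≤ (1 - t)⁻¹ * L * (G * (√(8 * volume.real S) * ((1 - t) ^ (-(3 / 2) : ℝ) * F₁))) := by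
        rw [integral_const_mul]
        exact mul_le_mul_of_nonneg_left (hG.integral_abs_mul_abs_le hΦ) (by positivity)
    _ = L * √(8 * volume.real S) * (G * F₁) * (1 - t) ^ (-(5 / 2) : ℝ) := by
        rw [hpow]
        ring

theorem integral_one_sub_rpow_le (hq : 0 < q) :
    ∫ t in (0 : ℝ)..(1 - q ^ 2), (1 - t) ^ (-(5 / 2) : ℝ) ≤ (q ^ 3)⁻¹ := by
  rw [intervalIntegral.integral_comp_sub_left (fun t => t ^ (-(5 / 2) : ℝ)) 1, sub_sub_cancel,
    sub_zero, integral_rpow (Or.inr ⟨by norm_num, by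
      rw [Set.mem_uIcc]; rintro (h | h) <;> nlinarith [pow_pos hq 2]⟩)]
  have hpow : (q ^ 2) ^ (-(5 / 2) + 1 : ℝ) = (q ^ 3)⁻¹ := by
    rw [← rpow_natCast_mul hq.le, ← rpow_natCast, ← rpow_neg hq.le]
    norm_num
  have hq3 : 0 < (q ^ 3)⁻¹ := by positivity
  rw [hpow, one_rpow, div_le_iff_of_neg (by norm_num)]
  linarith

theorem abs_integral_segmentPairing_pd_le (hconv : Convex ℝ S) (hρ : IsAveragingWeight S ρ L)
    (hg : ContDiff ℝ ∞ g) (hgs : tsupport g ⊆ S) (hF : ContDiff ℝ ∞ F) (hG : L2Le S g G)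
    (hF₁ : L1Le S F F₁) (hD : ∀ a ∈ S, L2Le S (pd j fun y => g y * (y k - a k)) D)
    (hF₂ : L2Le S F F₂) (hq : 0 < q) (hq2 : q ^ 2 ≤ 1 / 2) :
    |∫ t in (0 : ℝ)..1, segmentPairing S ρ g k (pd j F) t| ≤
      L * √(8 * volume.real S) * (G * F₁ / q ^ 3) + 6 * (q ^ 2 * (D * F₂)) := by
  have hc := continuous_segmentPairing (k := k) hG.isCompact hρ.contDiff.continuous hG.continuous
    (contDiff_pd j hF).continuous
  have hq0 : 0 < q ^ 2 := by positivity
  have hL := hρ.bound_nonneg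
  have hGF := mul_nonneg hG.nonneg hF₁.nonneg
  have haway : |∫ t in (0 : ℝ)..(1 - q ^ 2), segmentPairing S ρ g k (pd j F) t| ≤
      L * √(8 * volume.real S) * (G * F₁) * (q ^ 3)⁻¹ := by
    have hint : IntervalIntegrable (fun t : ℝ => L * √(8 * volume.real S) * (G * F₁) *
        (1 - t) ^ (-(5 / 2) : ℝ)) volume 0 (1 - q ^ 2) :=
      (continuousOn_const.mul (ContinuousOn.rpow_const (by fun_prop) fun t ht => .inl (by
        rw [Set.uIcc_of_le (by linarith)] at ht
        linarith [ht.2]))).intervalIntegrable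
    refine (intervalIntegral.norm_integral_le_of_norm_le (f := segmentPairing S ρ g k (pd j F))
      (by linarith) (.of_forall fun t ht => abs_segmentPairing_pd_le_rpow hconv hρ hF hG hF₁ ht.1.le
        (by linarith [ht.2])) hint).trans ?_
    rw [intervalIntegral.integral_const_mul]
    exact mul_le_mul_of_nonneg_left (integral_one_sub_rpow_le hq) (by positivity)
  have hnear : |∫ t in (1 - q ^ 2)..1, segmentPairing S ρ g k (pd j F) t| ≤
      6 * (D * F₂) * |1 - (1 - q ^ 2)| :=
    intervalIntegral.norm_integral_le_of_norm_le_const (f := segmentPairing S ρ g k (pd j F))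
      fun t ht => by
      rw [Set.uIoc_of_le (by linarith)] at ht
      exact abs_segmentPairing_pd_le_near_one hconv hρ hg hgs hF hD hF₂ (by linarith [ht.1]) ht.2
  rw [← intervalIntegral.integral_add_adjacent_intervals (b := 1 - q ^ 2)
    (hc.intervalIntegrable _ _) (hc.intervalIntegrable _ _)]
  refine (abs_add_le _ _).trans ((add_le_add haway hnear).trans_eq ?_)
  rw [sub_sub_cancel, abs_of_pos hq0]
  ring

end SegmentPairingBounds

section BumpFunctions

theorem hasCompactSupport_deriv_smoothTransition : HasCompactSupport (deriv smoothTransition) := by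
  refine .intro (isCompact_Icc (a := (0 : ℝ)) (b := 1)) fun t ht => ?_
  rw [Set.mem_Icc, not_and_or, not_le, not_le] at ht
  rcases ht with ht | ht
  · have hlocal : smoothTransition =ᶠ[𝓝 t] fun _ => 0 := by
      filter_upwards [Iio_mem_nhds ht] with y hy
      exact smoothTransition.zero_of_nonpos (le_of_lt hy)
    rw [hlocal.deriv_eq, deriv_const]
  · have hlocal : smoothTransition =ᶠ[𝓝 t] fun _ => 1 := by
      filter_upwards [Ioi_mem_nhds ht] with y hy
      exact smoothTransition.one_of_one_le (le_of_lt hy)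
    rw [hlocal.deriv_eq, deriv_const]

theorem contDiff_deriv_smoothTransition : ContDiff ℝ ∞ (deriv smoothTransition) :=
  (contDiff_infty_iff_deriv.1 smoothTransition.contDiff).2

theorem exists_abs_deriv_smoothTransition_le : ∃ M : ℝ, 1 ≤ M ∧
    ∀ t, |deriv smoothTransition t| ≤ M ∧ |deriv (deriv smoothTransition) t| ≤ M := by
  obtain ⟨M₁, hM₁⟩ := hasCompactSupport_deriv_smoothTransition.exists_bound_of_continuous
    contDiff_deriv_smoothTransition.continuous
  obtain ⟨M₂, hM₂⟩ := hasCompactSupport_deriv_smoothTransition.deriv.exists_bound_of_continuous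
    (contDiff_infty_iff_deriv.1 contDiff_deriv_smoothTransition).2.continuous
  exact ⟨max 1 (max M₁ M₂), le_max_left _ _, fun t =>
    ⟨(hM₁ t).trans ((le_max_left _ _).trans (le_max_right _ _)),
      (hM₂ t).trans ((le_max_right _ _).trans (le_max_right _ _))⟩⟩

/-- A smooth cutoff function which is `1` on the ball of radius `r` and supported in the ball of
radius `s`, with first and second derivatives controlled by the powers of `(s - r)⁻¹` dictated by
scaling. -/
structure IsCutoff (r s c : ℝ) (φ : E3 → ℝ) : Prop where
  contDiff : ContDiff ℝ ∞ φ
  nonneg : ∀ x, 0 ≤ φ x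
  le_one : ∀ x, φ x ≤ 1
  eq_one : ∀ x ∈ closedBall (0 : E3) r, φ x = 1
  tsupport_subset : tsupport φ ⊆ closedBall (0 : E3) s
  abs_pd_le : ∀ i x, |pd i φ x| ≤ c / (s - r)
  abs_pd_pd_le : ∀ i j x, |pd i (pd j φ) x| ≤ c / (s - r) ^ 2

/-- The radial cutoff equal to `1` for `‖x‖ ≤ r` and to `0` for `s ≤ ‖x‖`, as a function of `‖x‖²`
to avoid the singularity of the norm at the origin. -/
def radialCutoff (r s : ℝ) (x : E3) : ℝ :=
  smoothTransition ((s ^ 2 - r ^ 2)⁻¹ * (s ^ 2 - ‖x‖ ^ 2))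

variable {r s M : ℝ}

theorem contDiff_radialCutoff : ContDiff ℝ ∞ (radialCutoff r s) :=
  smoothTransition.contDiff.comp (contDiff_const.mul (contDiff_const.sub (contDiff_norm_sq ℝ)))

theorem radialCutoff_eq_one (hr : 0 ≤ r) (hrs : r < s) {x : E3} (hx : ‖x‖ ≤ r) :
    radialCutoff r s x = 1 := by
  refine smoothTransition.one_of_one_le ?_
  rw [inv_mul_eq_div, one_le_div (by nlinarith)]
  gcongr

theorem radialCutoff_eq_zero (hr : 0 ≤ r) (hrs : r < s) {x : E3} (hx : s ≤ ‖x‖) :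
    radialCutoff r s x = 0 := by
  have hden : 0 ≤ s ^ 2 - r ^ 2 := by nlinarith
  have hnum : s ^ 2 ≤ ‖x‖ ^ 2 := pow_le_pow_left₀ (hr.trans hrs.le) hx 2
  exact smoothTransition.zero_of_nonpos
    (mul_nonpos_of_nonneg_of_nonpos (inv_nonneg.2 hden) (sub_nonpos.2 hnum))

theorem tsupport_radialCutoff_subset (hr : 0 ≤ r) (hrs : r < s) :
    tsupport (radialCutoff r s) ⊆ closedBall 0 s := by
  refine closure_minimal (fun x hx => ?_) isClosed_closedBall
  by_contra hxs
  rw [mem_closedBall_zero_iff, not_le] at hxs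
  exact hx (radialCutoff_eq_zero hr hrs hxs.le)

theorem pd_const_mul_sub_norm_sq (i : Fin 3) (m c : ℝ) (x : E3) :
    pd i (fun y => m * (c - ‖y‖ ^ 2)) x = -(2 * m) * x i := by
  have hnorm : Differentiable ℝ fun y : E3 => ‖y‖ ^ 2 :=
    (contDiff_norm_sq ℝ).differentiable two_ne_zero
  have hpd : pd i (fun y => ‖y‖ ^ 2) x = 2 * x i := by
    simp [pd, fderiv_norm_sq_apply, EuclideanSpace.inner_single_right]
  rw [pd_const_mul i m (by fun_prop), pd_sub i (by fun_prop) hnorm, pd_const, hpd]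
  ring

theorem pd_comp_const_mul_sub_norm_sq {χ : ℝ → ℝ} (hχ : Differentiable ℝ χ) (i : Fin 3)
    (m c : ℝ) (x : E3) : pd i (fun y => χ (m * (c - ‖y‖ ^ 2))) x =
      deriv χ (m * (c - ‖x‖ ^ 2)) * (-(2 * m) * x i) := by
  have hnorm : Differentiable ℝ fun y : E3 => ‖y‖ ^ 2 :=
    (contDiff_norm_sq ℝ).differentiable two_ne_zero
  rw [pd_real_comp i hχ (f := fun y => m * (c - ‖y‖ ^ 2)) (by fun_prop), pd_const_mul_sub_norm_sq]

theorem abs_two_inv_mul_coord_le (hr : 0 ≤ r) (hrs : r < s) {x : E3} (hx : ‖x‖ ≤ s) (i : Fin 3) :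
    |-(2 * (s ^ 2 - r ^ 2)⁻¹) * x i| ≤ 2 / (s - r) := by
  have hs : 0 < s := hr.trans_lt hrs
  have hd : 0 < s - r := sub_pos.2 hrs
  have hm : (s ^ 2 - r ^ 2)⁻¹ ≤ ((s - r) * s)⁻¹ := inv_anti₀ (by positivity) (by nlinarith)
  have hden : 0 ≤ (s ^ 2 - r ^ 2)⁻¹ := inv_nonneg.2 (by nlinarith)
  calc |-(2 * (s ^ 2 - r ^ 2)⁻¹) * x i| = 2 * (s ^ 2 - r ^ 2)⁻¹ * |x i| := by
        rw [abs_mul, abs_neg, abs_of_nonneg (by positivity)]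
    _ ≤ 2 * ((s - r) * s)⁻¹ * s := by
        gcongr
        exact (abs_coord_le_norm x i).trans hx
    _ = 2 / (s - r) := by field_simp

theorem abs_pd_radialCutoff_le (hr : 0 ≤ r) (hrs : r < s)
    (hM : ∀ t, |deriv smoothTransition t| ≤ M) (i : Fin 3) (x : E3) :
    |pd i (radialCutoff r s) x| ≤ 2 * M / (s - r) := by
  have hM0 : 0 ≤ M := (abs_nonneg _).trans (hM 0)
  have : 0 < s - r := sub_pos.2 hrs
  by_cases hx : x ∈ closedBall 0 s
  · unfold radialCutoff
    rw [pd_comp_const_mul_sub_norm_sq (smoothTransition.contDiff.differentiable one_ne_zero),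
      abs_mul]
    calc _ ≤ M * (2 / (s - r)) := mul_le_mul (hM _)
          (abs_two_inv_mul_coord_le hr hrs (mem_closedBall_zero_iff.1 hx) i) (abs_nonneg _) hM0
      _ = 2 * M / (s - r) := by ring
  · rw [pd_eq_zero_of_notMem_tsupport i fun h => hx (tsupport_radialCutoff_subset hr hrs h),
      abs_zero]
    positivity

theorem pd_pd_radialCutoff (i j : Fin 3) (x : E3) :
    pd i (pd j (radialCutoff r s)) x =
      deriv (deriv smoothTransition) ((s ^ 2 - r ^ 2)⁻¹ * (s ^ 2 - ‖x‖ ^ 2)) *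
          (-(2 * (s ^ 2 - r ^ 2)⁻¹) * x i) * (-(2 * (s ^ 2 - r ^ 2)⁻¹) * x j) +
        deriv smoothTransition ((s ^ 2 - r ^ 2)⁻¹ * (s ^ 2 - ‖x‖ ^ 2)) *
          (-(2 * (s ^ 2 - r ^ 2)⁻¹) * if i = j then 1 else 0) := by
  have hd1 : Differentiable ℝ smoothTransition :=
    smoothTransition.contDiff.differentiable one_ne_zero
  have hd2 : Differentiable ℝ (deriv smoothTransition) :=
    differentiable_of_contDiff_infty contDiff_deriv_smoothTransition
  have hnorm : Differentiable ℝ fun y : E3 => ‖y‖ ^ 2 :=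
    (contDiff_norm_sq ℝ).differentiable two_ne_zero
  have hpd : pd j (radialCutoff r s) = fun y =>
      deriv smoothTransition ((s ^ 2 - r ^ 2)⁻¹ * (s ^ 2 - ‖y‖ ^ 2)) *
        (-(2 * (s ^ 2 - r ^ 2)⁻¹) * y j) :=
    funext fun y => pd_comp_const_mul_sub_norm_sq hd1 j _ _ y
  rw [hpd, pd_mul i (f := fun y => deriv smoothTransition _) (hd2.comp (by fun_prop))
    (by fun_prop), pd_comp_const_mul_sub_norm_sq hd2, pd_const_mul i _ (by fun_prop), pd_coord]

theorem abs_pd_pd_radialCutoff_le (hr : 0 ≤ r) (hrs : r < s)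
    (hM₁ : ∀ t, |deriv smoothTransition t| ≤ M) (hM₂ : ∀ t, |deriv (deriv smoothTransition) t| ≤ M)
    (i j : Fin 3) (x : E3) : |pd i (pd j (radialCutoff r s)) x| ≤ 6 * M / (s - r) ^ 2 := by
  have hM0 : 0 ≤ M := (abs_nonneg _).trans (hM₁ 0)
  have : 0 < s - r := sub_pos.2 hrs
  by_cases hx : x ∈ closedBall 0 s
  · have hcoord := abs_two_inv_mul_coord_le hr hrs (mem_closedBall_zero_iff.1 hx)
    have hm : (s ^ 2 - r ^ 2)⁻¹ ≤ ((s - r) ^ 2)⁻¹ := inv_anti₀ (by positivity) (by nlinarith)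
    have hm0 : 0 ≤ (s ^ 2 - r ^ 2)⁻¹ := inv_nonneg.2 (by nlinarith)
    have hδ : |(if i = j then 1 else 0 : ℝ)| ≤ 1 := by split_ifs <;> simp
    rw [pd_pd_radialCutoff]
    refine (abs_add_le _ _).trans ?_
    rw [abs_mul, abs_mul, abs_mul (deriv _ _), abs_mul (-(2 * (s ^ 2 - r ^ 2)⁻¹)) (ite _ _ _),
      abs_neg, abs_of_nonneg (by positivity : 0 ≤ 2 * (s ^ 2 - r ^ 2)⁻¹)]
    calc _ ≤ M * (2 / (s - r)) * (2 / (s - r)) + M * (2 * ((s - r) ^ 2)⁻¹ * 1) := by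
          gcongr
          exacts [hM₂ _, hcoord i, hcoord j, hM₁ _]
      _ = 6 * M / (s - r) ^ 2 := by field_simp; ring
  · have hsub : tsupport (pd j (radialCutoff r s)) ⊆ closedBall 0 s := by
      refine closure_minimal (fun y hy => ?_) isClosed_closedBall
      by_contra hys
      exact hy (pd_eq_zero_of_notMem_tsupport j
        fun h => hys (tsupport_radialCutoff_subset hr hrs h))
    rw [pd_eq_zero_of_notMem_tsupport i fun h => hx (hsub h), abs_zero]
    positivity

theorem exists_isCutoff :
    ∃ C : ℝ, 1 ≤ C ∧ ∀ r s : ℝ, 0 ≤ r → r < s → IsCutoff r s C (radialCutoff r s) := by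
  obtain ⟨M, hM1, hM⟩ := exists_abs_deriv_smoothTransition_le
  refine ⟨6 * M, by linarith, fun r s hr hrs => ?_⟩
  have : 0 < s - r := sub_pos.2 hrs
  exact
    { contDiff := contDiff_radialCutoff
      nonneg := fun _ => smoothTransition.nonneg _
      le_one := fun _ => smoothTransition.le_one _
      eq_one := fun x hx => radialCutoff_eq_one hr hrs (mem_closedBall_zero_iff.1 hx)
      tsupport_subset := tsupport_radialCutoff_subset hr hrs
      abs_pd_le := fun i x => (abs_pd_radialCutoff_le hr hrs (fun t => (hM t).1) i x).trans
        (by gcongr; norm_num)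
      abs_pd_pd_le := abs_pd_pd_radialCutoff_le hr hrs (fun t => (hM t).1) fun t => (hM t).2 }

theorem exists_abs_pd_mul_sub_le {ρ : E3 → ℝ} (hρ : ContDiff ℝ ∞ ρ) (hc : HasCompactSupport ρ)
    {S : Set E3} (hS : IsCompact S) :
    ∃ L, ∀ x ∈ S, ∀ a k j, |pd j (fun y => ρ y * (x k - y k)) a| ≤ L := by
  have hpd (x a : E3) (k j : Fin 3) : pd j (fun y => ρ y * (x k - y k)) a =
      pd j ρ a * (x k - a k) + ρ a * (0 - if j = k then 1 else 0) := by
    rw [pd_mul j (by fun_prop) (by fun_prop), pd_sub j (by fun_prop) (by fun_prop), pd_const,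
      pd_coord]
  choose L hL using fun k j => (hS.prod hc).exists_bound_of_continuousOn
    (f := fun z : E3 × E3 => pd j ρ z.2 * (z.1 k - z.2 k) + ρ z.2 * (0 - if j = k then 1 else 0))
    (Continuous.continuousOn (by fun_prop))
  refine ⟨∑ k, ∑ j, |L k j|, fun x hx a k j => ?_⟩
  have hle : |L k j| ≤ ∑ k, ∑ j, |L k j| :=
    (Finset.single_le_sum (fun j _ => abs_nonneg (L k j)) (Finset.mem_univ j)).trans
      (Finset.single_le_sum (f := fun k => ∑ j, |L k j|)
        (fun k _ => Finset.sum_nonneg fun j _ => abs_nonneg (L k j)) (Finset.mem_univ k))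
  by_cases ha : a ∈ tsupport ρ
  · rw [hpd]
    exact (hL k j (x, a) ⟨hx, ha⟩).trans ((le_abs_self _).trans hle)
  · rw [pd_eq_zero_of_notMem_tsupport j fun h => ha (tsupport_mul_subset_left h), abs_zero]
    exact (abs_nonneg _).trans hle

theorem exists_isAveragingWeight {r : ℝ} (hr : 0 < r) (R : ℝ) : ∃ ρ L, ∀ S : Set E3,
    closedBall 0 r ⊆ S → S ⊆ closedBall 0 R → IsAveragingWeight S ρ L := by
  let φ : ContDiffBump (0 : E3) := ⟨r / 2, r, by positivity, by linarith⟩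
  have htsupport : tsupport (φ.normed volume) = closedBall 0 r :=
    φ.tsupport_normed_eq (μ := volume)
  obtain ⟨L, hL⟩ := exists_abs_pd_mul_sub_le (φ.contDiff_normed (μ := volume))
    φ.hasCompactSupport_normed (isCompact_closedBall (0 : E3) R)
  refine ⟨φ.normed volume, L, fun S hrS hSR => ?_⟩
  have hS : tsupport (φ.normed volume) ⊆ S := htsupport.trans_subset hrS
  exact
    { contDiff := φ.contDiff_normed
      nonneg := φ.nonneg_normed
      tsupport_subset := hS
      integral_eq_one := by
        rw [setIntegral_eq_integral_of_forall_compl_eq_zero fun x hx =>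
          image_eq_zero_of_notMem_tsupport fun h => hx (hS h)]
        exact φ.integral_normed
      abs_pd_le := fun x hx => hL x (hSR hx) }

end BumpFunctions

section Sobolev

theorem eLpNorm_pow_eq_ofReal_integral {X E : Type*} [MeasurableSpace X] {μ : Measure X}
    [NormedAddCommGroup E] {f : X → E} {n : ℕ} (hn : n ≠ 0) (hf : MemLp f n μ) :
    eLpNorm f n μ ^ n = ENNReal.ofReal (∫ x, ‖f x‖ ^ n ∂μ) := by
  rw [hf.eLpNorm_eq_integral_rpow_norm (by exact_mod_cast hn) (ENNReal.natCast_ne_top n),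
    ← ENNReal.ofReal_pow (by positivity)]
  simp only [ENNReal.toReal_natCast, rpow_natCast]
  rw [rpow_inv_natCast_pow (integral_nonneg fun _ => by positivity) hn]

theorem exists_integral_pow_six_le : ∃ S : ℝ, 0 ≤ S ∧
    ∀ f : E3 → ℝ, ContDiff ℝ 1 f → HasCompactSupport f →
    ∫ x, f x ^ 6 ≤ S * (∫ x, ‖fderiv ℝ f x‖ ^ 2) ^ 3 := by
  refine ⟨SNormLESNormFDerivOfEqConst ℝ (volume : Measure E3) 2 ^ 6, by positivity,
    fun f hf hc => ?_⟩
  have hdim : Module.finrank ℝ E3 = 3 := by simp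
  have h := pow_le_pow_left' (eLpNorm_le_eLpNorm_fderiv_of_eq (F := ℝ) volume (p := 2) (p' := 6)
    hf hc (by norm_num) (by rw [hdim]; norm_num) (by rw [hdim]; norm_num)) 6
  have hf6 := eLpNorm_pow_eq_ofReal_integral (μ := volume) (n := 6) (by norm_num)
    (hf.continuous.memLp_of_hasCompactSupport hc)
  have hf2 := eLpNorm_pow_eq_ofReal_integral (μ := volume) (n := 2) (by norm_num)
    ((hf.continuous_fderiv one_ne_zero).memLp_of_hasCompactSupport (hc.fderiv ℝ))
  simp only [Nat.cast_ofNat] at hf6 hf2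
  have hI : 0 ≤ ∫ x, ‖fderiv ℝ f x‖ ^ 2 := integral_nonneg fun _ => by positivity
  rw [ENNReal.coe_ofNat, ENNReal.coe_ofNat, hf6, mul_pow,
    show eLpNorm (fderiv ℝ f) 2 volume ^ 6 = (eLpNorm (fderiv ℝ f) 2 volume ^ 2) ^ 3 from
      pow_mul _ 2 3, hf2,
    ← ENNReal.ofReal_coe_nnreal, ← ENNReal.ofReal_pow (by positivity),
    ← ENNReal.ofReal_pow (by positivity), ← ENNReal.ofReal_mul (by positivity),
    ENNReal.ofReal_le_ofReal_iff (by positivity)] at h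
  simpa [Even.pow_abs (show Even 6 by decide), ← pow_mul] using h

theorem integral_norm_fderiv_sq_le {K : Set E3} {f : E3 → ℝ} {Z : ℝ} (hf : ContDiff ℝ ∞ f)
    (hsupp : tsupport f ⊆ K) (hZ : ∀ i, L2Le K (pd i f) Z) :
    ∫ x, ‖fderiv ℝ f x‖ ^ 2 ≤ 3 * Z ^ 2 := by
  have hK : IsCompact K := (hZ 0).isCompact
  have hzero : ∀ x ∉ K, ‖fderiv ℝ f x‖ ^ 2 = 0 := fun x hx => by
    rw [image_eq_zero_of_notMem_tsupport fun h => hx (hsupp (tsupport_fderiv_subset ℝ h))]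
    simp
  have hfd : Continuous (fderiv ℝ f) := hf.continuous_fderiv (by simp)
  rw [← setIntegral_eq_integral_of_forall_compl_eq_zero hzero]
  calc ∫ x in K, ‖fderiv ℝ f x‖ ^ 2 ≤ ∫ x in K, ∑ i, pd i f x ^ 2 :=
        setIntegral_mono_of_isCompact hK (by fun_prop) (by fun_prop)
          fun x _ => norm_fderiv_sq_le f x
    _ = ∑ i, ∫ x in K, pd i f x ^ 2 :=
        integral_finsetSum _ fun i _ => integrableOn_of_isCompact hK (by fun_prop)
    _ ≤ ∑ _i : Fin 3, Z ^ 2 := Finset.sum_le_sum fun i _ => (hZ i).integral_sq_le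
    _ = 3 * Z ^ 2 := by simp

theorem exists_l2Le_pow_three_of_tsupport_subset : ∃ S : ℝ, 0 ≤ S ∧
    ∀ (K : Set E3) (f : E3 → ℝ) (Z : ℝ), ContDiff ℝ ∞ f → tsupport f ⊆ K →
      (∀ i, L2Le K (pd i f) Z) → L2Le K (fun x => f x ^ 3) (S * Z ^ 3) := by
  obtain ⟨S, hS0, hS⟩ := exists_integral_pow_six_le
  refine ⟨√(27 * S), Real.sqrt_nonneg _, fun K f Z hf hsupp hZ => ?_⟩
  have hK : IsCompact K := (hZ 0).isCompact
  have hZ0 : 0 ≤ Z := (hZ 0).nonneg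
  have hfc := hf.continuous
  refine ⟨hK, by fun_prop, by positivity, ?_⟩
  calc ∫ x in K, (f x ^ 3) ^ 2 ≤ ∫ x, f x ^ 6 := by
        rw [setIntegral_eq_integral_of_forall_compl_eq_zero fun x hx => by
          rw [image_eq_zero_of_notMem_tsupport fun h => hx (hsupp h)]; simp]
        simp only [← pow_mul, le_refl, Nat.reduceMul]
    _ ≤ S * (∫ x, ‖fderiv ℝ f x‖ ^ 2) ^ 3 :=
        hS f (hf.of_le (by simp)) (hK.of_isClosed_subset (isClosed_tsupport f) hsupp)
    _ ≤ S * (3 * Z ^ 2) ^ 3 := by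
        gcongr
        exact integral_norm_fderiv_sq_le hf hsupp hZ
    _ = (√(27 * S) * Z ^ 3) ^ 2 := by
        linear_combination -Z ^ 6 * Real.sq_sqrt (show 0 ≤ 27 * S by positivity)

variable {r s c X Z : ℝ} {φ f : E3 → ℝ}

theorem IsCutoff.const_nonneg (hφ : IsCutoff r s c φ) (hrs : r < s) : 0 ≤ c := by
  have h := (abs_nonneg _).trans (hφ.abs_pd_le 0 0)
  rwa [le_div_iff₀ (sub_pos.2 hrs), zero_mul] at h

theorem IsCutoff.abs_le_one (hφ : IsCutoff r s c φ) (x : E3) : |φ x| ≤ 1 := by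
  rw [abs_of_nonneg (hφ.nonneg x)]
  exact hφ.le_one x

theorem IsCutoff.l2Le_mul (hφ : IsCutoff r s c φ) (hf : L2Le (closedBall 0 s) f X) :
    L2Le (closedBall 0 s) (fun x => φ x * f x) X := by
  simpa using hf.bdd_mul hφ.contDiff.continuous (fun x _ => hφ.abs_le_one x) zero_le_one

theorem IsCutoff.l2Le_pd_mul (hφ : IsCutoff r s c φ) (hrs : r < s) (hf : ContDiff ℝ ∞ f)
    (hXZ : X / (s - r) ≤ Z) (hX : L2Le (closedBall 0 s) f X) {i : Fin 3}
    (hZ : L2Le (closedBall 0 s) (pd i f) Z) :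
    L2Le (closedBall 0 s) (pd i fun x => φ x * f x) ((c + 1) * Z) := by
  have hφs := hφ.contDiff
  have hc : 0 ≤ c := hφ.const_nonneg hrs
  have : 0 < s - r := sub_pos.2 hrs
  have hpd : (pd i fun x => φ x * f x) = fun x => pd i φ x * f x + φ x * pd i f x :=
    funext fun x => pd_mul i (by fun_prop) (by fun_prop) x
  rw [hpd]
  refine ((hX.bdd_mul (by fun_prop) (fun x _ => hφ.abs_pd_le i x) (by positivity)).add
    (hφ.l2Le_mul hZ)).mono ?_
  calc c / (s - r) * X + Z = c * (X / (s - r)) + Z := by ring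
    _ ≤ c * Z + Z := by gcongr
    _ = (c + 1) * Z := by ring

theorem exists_setIntegral_pow_four_le : ∃ S : ℝ, 0 ≤ S ∧ ∀ r s : ℝ, 0 ≤ r → r < s →
    ∀ (f : E3 → ℝ) (X Z : ℝ), ContDiff ℝ ∞ f → X / (s - r) ≤ Z →
      L2Le (closedBall 0 s) f X → (∀ i, L2Le (closedBall 0 s) (pd i f) Z) →
        ∫ x in closedBall 0 r, f x ^ 4 ≤ S * (X * Z ^ 3) := by
  obtain ⟨c, hc, hcut⟩ := exists_isCutoff
  obtain ⟨S, hS0, hS⟩ := exists_l2Le_pow_three_of_tsupport_subset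
  refine ⟨S * (c + 1) ^ 3, by positivity, fun r s hr hrs f X Z hf hXZ hX hZ => ?_⟩
  have hφ := hcut r s hr hrs
  have hφs := hφ.contDiff
  set φ := radialCutoff r s
  have hsupp : tsupport (fun x => φ x * f x) ⊆ closedBall 0 s :=
    tsupport_mul_subset_left.trans hφ.tsupport_subset
  have hg3 := hS (closedBall 0 s) (fun x => φ x * f x) _ (by fun_prop) hsupp
    fun i => hφ.l2Le_pd_mul hrs hf hXZ hX (hZ i)
  calc ∫ x in closedBall 0 r, f x ^ 4
      = ∫ x in closedBall 0 r, |φ x * f x| * |(φ x * f x) ^ 3| :=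
        setIntegral_congr_fun measurableSet_closedBall fun x hx => by
          simp only [hφ.eq_one x hx, one_mul]
          rw [← abs_mul, ← pow_succ', abs_of_nonneg (Even.pow_nonneg (by decide) _)]
    _ ≤ ∫ x in closedBall 0 s, |φ x * f x| * |(φ x * f x) ^ 3| :=
        setIntegral_mono_set_of_isCompact (isCompact_closedBall 0 s)
          (by fun_prop) (fun x => by positivity) (closedBall_subset_closedBall hrs.le)
    _ ≤ X * (S * ((c + 1) * Z) ^ 3) := (hφ.l2Le_mul hX).integral_abs_mul_abs_le hg3
    _ = S * (c + 1) ^ 3 * (X * Z ^ 3) := by ring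

end Sobolev

section ComponentFields

variable {v z : Fin 3 → E3 → ℝ} {f : E3 → ℝ}

/-- Divergence of a vector field given by its components. -/
def divField (v : Fin 3 → E3 → ℝ) (x : E3) : ℝ := ∑ i, pd i (v i) x

/-- Curl of a vector field given by its components, with indices taken modulo `3`. -/
def curlField (v : Fin 3 → E3 → ℝ) (j : Fin 3) (x : E3) : ℝ :=
  pd (j + 1) (v (j + 2)) x - pd (j + 2) (v (j + 1)) x

/-- The derivative `(v · ∇) f` of a function along a vector field given by its components. -/
def advect (v : Fin 3 → E3 → ℝ) (f : E3 → ℝ) (x : E3) : ℝ := ∑ i, v i x * pd i f x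

/-- Pointwise cross product of two vector fields given by their components, with indices taken
modulo `3`. -/
def crossField (v z : Fin 3 → E3 → ℝ) (j : Fin 3) (x : E3) : ℝ :=
  v (j + 1) x * z (j + 2) x - v (j + 2) x * z (j + 1) x

/-- Squared norm of the gradient of a vector field given by its components. -/
def gradEnergy (v : Fin 3 → E3 → ℝ) (x : E3) : ℝ := ∑ i, ∑ j, pd i (v j) x ^ 2

@[fun_prop]
theorem contDiff_divField (hv : ∀ i, ContDiff ℝ ∞ (v i)) : ContDiff ℝ ∞ (divField v) := by
  unfold divField
  fun_prop

@[fun_prop]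
theorem contDiff_advect (hv : ∀ i, ContDiff ℝ ∞ (v i)) (hf : ContDiff ℝ ∞ f) :
    ContDiff ℝ ∞ (advect v f) := by
  unfold advect
  fun_prop

@[fun_prop]
theorem contDiff_crossField (hv : ∀ i, ContDiff ℝ ∞ (v i)) (hz : ∀ i, ContDiff ℝ ∞ (z i))
    (j : Fin 3) : ContDiff ℝ ∞ (crossField v z j) := by
  unfold crossField
  fun_prop

theorem divField_add (hv : ∀ i, Differentiable ℝ (v i)) (hz : ∀ i, Differentiable ℝ (z i))
    (x : E3) : divField (fun i y => v i y + z i y) x = divField v x + divField z x := by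
  simp_rw [divField, ← Finset.sum_add_distrib, pd_add _ (hv _) (hz _)]

theorem divField_sub (hv : ∀ i, Differentiable ℝ (v i)) (hz : ∀ i, Differentiable ℝ (z i))
    (x : E3) : divField (fun i y => v i y - z i y) x = divField v x - divField z x := by
  simp_rw [divField, ← Finset.sum_sub_distrib, pd_sub _ (hv _) (hz _)]

theorem divField_const_mul (c : ℝ) (hv : ∀ i, Differentiable ℝ (v i)) (x : E3) :
    divField (fun i y => c * v i y) x = c * divField v x := by
  simp_rw [divField, Finset.mul_sum, pd_const_mul _ c (hv _)]

theorem divField_mul (hv : ∀ i, Differentiable ℝ (v i)) (hf : Differentiable ℝ f) (x : E3) :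
    divField (fun i y => v i y * f y) x = divField v x * f x + advect v f x := by
  simp_rw [divField, advect, Finset.sum_mul, ← Finset.sum_add_distrib, pd_mul _ (hv _) hf]

theorem pd_sum_mul (i : Fin 3) (hv : ∀ j, Differentiable ℝ (v j))
    (hz : ∀ j, Differentiable ℝ (z j)) (x : E3) :
    pd i (fun y => ∑ j, v j y * z j y) x = ∑ j, (pd i (v j) x * z j x + v j x * pd i (z j) x) := by
  rw [pd_sum (f := fun j y => v j y * z j y) _ i fun j => by fun_prop]
  exact Finset.sum_congr rfl fun j _ => pd_mul i (hv j) (hz j) x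

theorem pd_sum_mul_self (i : Fin 3) (hv : ∀ j, Differentiable ℝ (v j)) (x : E3) :
    pd i (fun y => ∑ j, v j y * v j y) x = 2 * ∑ j, v j x * pd i (v j) x := by
  rw [pd_sum_mul i hv hv, Finset.mul_sum]
  exact Finset.sum_congr rfl fun j _ => by ring

theorem divField_sum_mul_pd (hv : ∀ j, ContDiff ℝ ∞ (v j)) (x : E3) :
    divField (fun i y => ∑ j, v j y * pd i (v j) y) x =
      gradEnergy v x + ∑ j, v j x * lap (v j) x := by
  simp_rw [divField, pd_sum_mul _ (fun j => differentiable_of_contDiff_infty (hv j))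
    (fun j => differentiable_of_contDiff_infty (contDiff_pd _ (hv j))), Finset.sum_add_distrib,
    gradEnergy, lap, Finset.mul_sum, sq]
  rw [Finset.sum_comm (f := fun i j => v j x * _)]

theorem divField_crossField (hv : ∀ j, Differentiable ℝ (v j)) (hz : ∀ j, Differentiable ℝ (z j))
    (x : E3) : divField (crossField v z) x =
      (∑ i, z i x * curlField v i x) - ∑ i, v i x * curlField z i x := by
  have hpd (i : Fin 3) : pd i (crossField v z i) x =
      pd i (v (i + 1)) x * z (i + 2) x + v (i + 1) x * pd i (z (i + 2)) x -
        (pd i (v (i + 2)) x * z (i + 1) x + v (i + 2) x * pd i (z (i + 1)) x) := by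
    unfold crossField
    rw [pd_sub i (by fun_prop) (by fun_prop), pd_mul i (hv _) (hz _), pd_mul i (hv _) (hz _)]
  simp only [divField, hpd, curlField, Fin.sum_univ_three, Fin.reduceAdd, zero_add]
  ring

theorem divField_convection (hv : ∀ j, ContDiff ℝ ∞ (v j)) (hdiv : ∀ x, divField v x = 0)
    (x : E3) : divField (fun i => advect v (v i)) x =
      ∑ i, ∑ j, pd i (v j) x * pd j (v i) x := by
  have hdiv' (j : Fin 3) : ∑ i, pd j (pd i (v i)) x = 0 := by
    rw [← pd_sum _ j fun i => by fun_prop, ← pd_const j 0 x]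
    exact congrArg (pd j · x) (funext hdiv)
  have hpd (i : Fin 3) : pd i (advect v (v i)) x =
      ∑ j, (pd i (v j) x * pd j (v i) x + v j x * pd j (pd i (v i)) x) := by
    unfold advect
    rw [pd_sum_mul i (by fun_prop) (by fun_prop)]
    exact Finset.sum_congr rfl fun j _ => by rw [← pd_comm i j (contDiff_infty.1 (hv i) 2)]
  simp_rw [divField, hpd, Finset.sum_add_distrib]
  rw [Finset.sum_comm (f := fun i j => v j x * _)]
  simp_rw [← Finset.mul_sum, hdiv', mul_zero, Finset.sum_const_zero, add_zero]

theorem sum_curlField_sq (v : Fin 3 → E3 → ℝ) (x : E3) :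
    ∑ i, curlField v i x ^ 2 = gradEnergy v x - ∑ i, ∑ j, pd i (v j) x * pd j (v i) x := by
  simp only [curlField, gradEnergy, Fin.sum_univ_three, Fin.reduceAdd, zero_add]
  ring

end ComponentFields

section EnergyIdentity

/-- The magneto-micropolar system for component functions, in the form it takes after dilating
by `κ`. -/
structure IsDilatedSolution (κ : ℝ) (u w b : Fin 3 → E3 → ℝ) (P : E3 → ℝ) : Prop where
  smooth_u : ∀ j, ContDiff ℝ ∞ (u j)
  smooth_w : ∀ j, ContDiff ℝ ∞ (w j)
  smooth_b : ∀ j, ContDiff ℝ ∞ (b j)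
  smooth_P : ContDiff ℝ ∞ P
  eq_u : ∀ x j, pd j P x = lap (u j) x - advect u (u j) x + κ * curlField w j x +
    advect b (b j) x
  eq_w : ∀ x j, lap (w j) x = advect u (w j) x - pd j (divField w) x - κ * curlField u j x +
    2 * κ ^ 2 * w j x
  eq_b : ∀ x j, lap (b j) x = advect u (b j) x - advect b (u j) x
  div_u : ∀ x, divField u x = 0
  div_b : ∀ x, divField b x = 0

/-- The energy flux of the system, without the pressure contribution. The last term is
divergence-free up to `(2 / 3) (|∇u|² - |curl u|²)`; it makes part of `|∇u|²` control `curl u`. -/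
def energyFlux (κ : ℝ) (u w b : Fin 3 → E3 → ℝ) (i : Fin 3) (x : E3) : ℝ :=
  2⁻¹ * (u i x * ((∑ j, u j x * u j x) + (∑ j, w j x * w j x) + ∑ j, b j x * b j x)) -
    (∑ j, u j x * pd i (u j) x) - (∑ j, w j x * pd i (w j) x) - (∑ j, b j x * pd i (b j) x) -
    w i x * divField w x - b i x * (∑ j, u j x * b j x) + κ * crossField u w i x +
    2 / 3 * advect u (u i) x

variable {κ : ℝ} {u w b : Fin 3 → E3 → ℝ} {P : E3 → ℝ}

@[fun_prop]
theorem contDiff_energyFlux (hu : ∀ j, ContDiff ℝ ∞ (u j)) (hw : ∀ j, ContDiff ℝ ∞ (w j))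
    (hb : ∀ j, ContDiff ℝ ∞ (b j)) (i : Fin 3) : ContDiff ℝ ∞ (energyFlux κ u w b i) := by
  unfold energyFlux
  fun_prop

theorem IsDilatedSolution.divField_energyFlux (hs : IsDilatedSolution κ u w b P) (x : E3) :
    divField (energyFlux κ u w b) x =
      (∑ i, u i x * ((∑ j, u j x * pd i (u j) x) + (∑ j, w j x * pd i (w j) x) +
        ∑ j, b j x * pd i (b j) x)) -
      (gradEnergy u x + ∑ j, u j x * lap (u j) x) - (gradEnergy w x + ∑ j, w j x * lap (w j) x) -
      (gradEnergy b x + ∑ j, b j x * lap (b j) x) -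
      (divField w x ^ 2 + advect w (divField w) x) -
      (∑ i, b i x * ∑ j, (pd i (u j) x * b j x + u j x * pd i (b j) x)) +
      κ * ((∑ i, w i x * curlField u i x) - ∑ i, u i x * curlField w i x) +
      2 / 3 * ∑ i, ∑ j, pd i (u j) x * pd j (u i) x := by
  have hu := hs.smooth_u
  have hw := hs.smooth_w
  have hb := hs.smooth_b
  have hsq (i : Fin 3) : pd i
      (fun y => (∑ j, u j y * u j y) + (∑ j, w j y * w j y) + ∑ j, b j y * b j y) x =
      2 * ((∑ j, u j x * pd i (u j) x) + (∑ j, w j x * pd i (w j) x) +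
        ∑ j, b j x * pd i (b j) x) := by
    rw [pd_add i (by fun_prop) (by fun_prop), pd_add i (by fun_prop) (by fun_prop),
      pd_sum_mul_self i (by fun_prop), pd_sum_mul_self i (by fun_prop),
      pd_sum_mul_self i (by fun_prop)]
    ring
  unfold energyFlux
  rw [divField_add (by fun_prop) (by fun_prop), divField_add (by fun_prop) (by fun_prop),
    divField_sub (by fun_prop) (by fun_prop), divField_sub (by fun_prop) (by fun_prop),
    divField_sub (by fun_prop) (by fun_prop), divField_sub (by fun_prop) (by fun_prop),
    divField_sub (by fun_prop) (by fun_prop), divField_const_mul _ (by fun_prop),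
    divField_const_mul _ (by fun_prop), divField_const_mul _ (by fun_prop),
    divField_mul (by fun_prop) (by fun_prop), divField_mul (by fun_prop) (by fun_prop),
    divField_mul (by fun_prop) (by fun_prop), divField_sum_mul_pd hu, divField_sum_mul_pd hw,
    divField_sum_mul_pd hb, divField_crossField (by fun_prop) (by fun_prop),
    divField_convection hu hs.div_u, hs.div_u, hs.div_b]
  simp_rw [advect, hsq, pd_sum_mul _ (fun j => differentiable_of_contDiff_infty (hu j))
    (fun j => differentiable_of_contDiff_infty (hb j)), mul_left_comm _ (2 : ℝ), ← Finset.mul_sum]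
  ring

theorem IsDilatedSolution.divField_energyFlux_add_pressure (hs : IsDilatedSolution κ u w b P)
    (x : E3) : divField (fun i y => energyFlux κ u w b i y + u i y * P y) x =
      2 * ∑ j, κ * (w j x * curlField u j x) + 2 / 3 * (∑ i, ∑ j, pd i (u j) x * pd j (u i) x) -
        gradEnergy u x - gradEnergy w x - gradEnergy b x - divField w x ^ 2 -
        2 * ∑ j, (κ * w j x) ^ 2 := by
  have hu := hs.smooth_u
  have hw := hs.smooth_w
  have hb := hs.smooth_b
  have hP := hs.smooth_P
  rw [divField_add (by fun_prop) (by fun_prop), divField_mul (by fun_prop) (by fun_prop),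
    hs.divField_energyFlux, hs.div_u]
  simp only [advect, hs.eq_u, hs.eq_w, hs.eq_b, Fin.sum_univ_three]
  ring

theorem two_mul_mul_le_young (s t : ℝ) : 2 * (s * t) ≤ 3 / 2 * s ^ 2 + 2 / 3 * t ^ 2 := by
  nlinarith [sq_nonneg (3 * s - 2 * t)]

theorem IsDilatedSolution.energy_le_neg_divField (hs : IsDilatedSolution κ u w b P) (x : E3) :
    3⁻¹ * gradEnergy u x + gradEnergy w x + gradEnergy b x + 2⁻¹ * ∑ j, (κ * w j x) ^ 2 ≤
      -divField (fun i y => energyFlux κ u w b i y + u i y * P y) x := by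
  have hyoung : 2 * ∑ j, κ * (w j x * curlField u j x) ≤
      3 / 2 * (∑ j, (κ * w j x) ^ 2) + 2 / 3 * ∑ j, curlField u j x ^ 2 := by
    simp_rw [Finset.mul_sum, ← Finset.sum_add_distrib, ← mul_assoc κ]
    exact Finset.sum_le_sum fun j _ => two_mul_mul_le_young _ _
  rw [sum_curlField_sq] at hyoung
  rw [hs.divField_energyFlux_add_pressure]
  linarith [sq_nonneg (divField w x)]

end EnergyIdentity

theorem L2Le.mul_of_sq {X : Type*} [TopologicalSpace X] [T2Space X] [MeasureSpace X]
    [BorelSpace X] [IsFiniteMeasureOnCompacts (volume : Measure X)] {K : Set X} {f g : X → ℝ}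
    {c : ℝ} (hf : Continuous f) (hg : Continuous g) (hf2 : L2Le K (fun x => f x ^ 2) c)
    (hg2 : L2Le K (fun x => g x ^ 2) c) : L2Le K (fun x => f x * g x) c := by
  have hmean : L2Le K (fun x => 2⁻¹ * (f x ^ 2 + g x ^ 2)) c :=
    ((hf2.add hg2).const_mul 2⁻¹).mono (by rw [abs_of_pos (by norm_num)]; linarith)
  refine hmean.of_abs_le (hf.mul hg) fun x _ => ?_
  rw [abs_of_nonneg (a := 2⁻¹ * _) (by positivity), abs_le]
  constructor <;> nlinarith [sq_nonneg (f x + g x), sq_nonneg (f x - g x)]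

/-- Bounds for a vector field on a compact set: the components are at most `X` in `L²`, their
partial derivatives at most `Z` in `L²`, and the squares of the components at most `Q` in `L²`. -/
structure FieldBounds (K : Set E3) (X Z Q : ℝ) (v : Fin 3 → E3 → ℝ) : Prop where
  l2 : ∀ j, L2Le K (v j) X
  grad : ∀ i j, L2Le K (pd i (v j)) Z
  sq : ∀ j, L2Le K (fun x => v j x ^ 2) Q

section LocalEnergy

variable {K : Set E3} {κ X Z Q : ℝ} {u w b v z : Fin 3 → E3 → ℝ} {P φ : E3 → ℝ}

theorem FieldBounds.mul (hv : FieldBounds K X Z Q v) (hz : FieldBounds K X Z Q z) (i j : Fin 3) :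
    L2Le K (fun x => v i x * z j x) Q :=
  .mul_of_sq (hv.l2 i).continuous (hz.l2 j).continuous (hv.sq i) (hz.sq j)

theorem FieldBounds.sum_mul (hv : FieldBounds K X Z Q v) (hz : FieldBounds K X Z Q z) :
    L2Le K (fun x => ∑ j, v j x * z j x) (3 * Q) :=
  (L2Le.sum (hv.sq 0).isCompact fun j _ => hv.mul hz j j).mono (by simp)

theorem FieldBounds.sum_mul_pd (hv : FieldBounds K X Z Q v) (hz : FieldBounds K X Z Q z)
    (k l : Fin 3 → Fin 3) : L1Le K (fun x => ∑ j, v j x * pd (k j) (z (l j)) x) (3 * (X * Z)) :=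
  (L1Le.sum (hv.sq 0).isCompact fun j _ => (hv.l2 j).mul (hz.grad (k j) (l j))).mono (by simp)

theorem FieldBounds.l2Le_divField (hv : FieldBounds K X Z Q v) : L2Le K (divField v) (3 * Z) :=
  (L2Le.sum (hv.sq 0).isCompact fun j _ => hv.grad j j).mono (by simp)

theorem FieldBounds.l1Le_const_mul_crossField (hu : FieldBounds K X Z Q u)
    (hwc : ∀ j, Continuous (w j)) (hκw : ∀ j, L2Le K (fun x => κ * w j x) Z) (i : Fin 3) :
    L1Le K (fun x => κ * crossField u w i x) (2 * (X * Z)) := by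
  have huc (j : Fin 3) := (hu.l2 j).continuous
  refine ((((hu.l2 (i + 1)).mul (hκw (i + 2))).sub
    ((hu.l2 (i + 2)).mul (hκw (i + 1)))).mono (by linarith)).of_abs_le ?_ fun x _ => le_of_eq ?_
  · unfold crossField
    fun_prop
  · rw [crossField]
    ring_nf

theorem L1Le.energyFlux (hu : FieldBounds K X Z Q u) (hw : FieldBounds K X Z Q w)
    (hb : FieldBounds K X Z Q b) (hκw : ∀ j, L2Le K (fun x => κ * w j x) Z) (i : Fin 3) :
    L1Le K (energyFlux κ u w b i) (16 * (X * Z) + 8 * (X * Q)) := by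
  have hconv := ((hu.l2 i).mul
    (((hu.sum_mul hu).add (hw.sum_mul hw)).add (hb.sum_mul hb))).const_mul 2⁻¹
  have hcross := hu.l1Le_const_mul_crossField (fun j => (hw.l2 j).continuous) hκw i
  have hcorr := (hu.sum_mul_pd hu (fun j => j) fun _ => i).const_mul (2 / 3)
  refine (((((((hconv.sub (hu.sum_mul_pd hu (fun _ => i) fun j => j)).sub
    (hw.sum_mul_pd hw (fun _ => i) fun j => j)).sub
    (hb.sum_mul_pd hb (fun _ => i) fun j => j)).sub ((hw.l2 i).mul hw.l2Le_divField)).sub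
    ((hb.l2 i).mul (hu.sum_mul hb))).add hcross).add hcorr).mono ?_
  rw [abs_of_pos (by norm_num : (0 : ℝ) < 2⁻¹), abs_of_pos (by norm_num : (0 : ℝ) < 2 / 3)]
  linarith [((hu.l2 i).mul (hu.sq i)).nonneg]

theorem sum_setIntegral_mul_le {a : Fin 3 → E3 → ℝ} {A c : ℝ}
    (ha : ∀ i, Continuous (a i)) (hA0 : 0 ≤ A) (hA : ∀ i x, |a i x| ≤ A)
    (hF : ∀ i, L1Le K (v i) c) : ∑ i, ∫ x in K, a i x * v i x ≤ 3 * (A * c) := by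
  calc ∑ i, ∫ x in K, a i x * v i x ≤ ∑ _ : Fin 3, A * c := Finset.sum_le_sum fun i _ =>
        (le_abs_self _).trans ((hF i).bdd_mul (ha i) (fun x _ => hA i x) hA0).abs_integral_le
    _ = 3 * (A * c) := by simp

theorem setIntegral_mul_divField (hφ : ContDiff ℝ ∞ φ) (hv : ∀ i, ContDiff ℝ ∞ (v i))
    (hK : IsCompact K) (hs : tsupport φ ⊆ K) :
    ∫ x in K, φ x * divField v x = -∑ i, ∫ x in K, pd i φ x * v i x := by
  simp_rw [divField, Finset.mul_sum]
  rw [integral_finsetSum _ fun i _ => integrableOn_of_isCompact hK (by fun_prop),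
    ← Finset.sum_neg_distrib]
  exact Finset.sum_congr rfl fun i _ => setIntegral_mul_pd i hφ (hv i) hK hs

theorem IsDilatedSolution.setIntegral_mul_energy_le (hs : IsDilatedSolution κ u w b P)
    (hφ : ContDiff ℝ ∞ φ) (hφ0 : ∀ x, 0 ≤ φ x) (hK : IsCompact K) (hφs : tsupport φ ⊆ K) :
    ∫ x in K, φ x * (3⁻¹ * gradEnergy u x + gradEnergy w x + gradEnergy b x +
        2⁻¹ * ∑ j, (κ * w j x) ^ 2) ≤
      (∑ i, ∫ x in K, pd i φ x * energyFlux κ u w b i x) +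
        ∫ x in K, P x * advect u φ x := by
  have hu := hs.smooth_u
  have hw := hs.smooth_w
  have hb := hs.smooth_b
  have hP := hs.smooth_P
  have hint {f : E3 → ℝ} (hf : Continuous f) : IntegrableOn f K := integrableOn_of_isCompact hK hf
  calc _ ≤ ∫ x in K, -(φ x * divField (fun i y => energyFlux κ u w b i y + u i y * P y) x) :=
        setIntegral_mono_of_isCompact hK (by unfold gradEnergy; fun_prop) (by fun_prop)
          fun x _ => by
            rw [← mul_neg]
            exact mul_le_mul_of_nonneg_left (hs.energy_le_neg_divField x) (hφ0 x)
    _ = ∑ i, ∫ x in K, pd i φ x * (energyFlux κ u w b i x + u i x * P x) := by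
        rw [integral_neg, setIntegral_mul_divField hφ (by fun_prop) hK hφs, neg_neg]
    _ = (∑ i, ∫ x in K, pd i φ x * energyFlux κ u w b i x) +
          ∑ i, ∫ x in K, P x * (u i x * pd i φ x) := by
        rw [← Finset.sum_add_distrib]
        refine Finset.sum_congr rfl fun i _ => ?_
        rw [← integral_add (hint (by fun_prop)) (hint (by fun_prop))]
        congr with x
        ring
    _ = _ := by
        simp_rw [advect, Finset.mul_sum]
        rw [integral_finsetSum _ fun i _ => hint (by fun_prop)]

end LocalEnergy

section SegmentTest

variable {S : Set E3} {ρ g F : E3 → ℝ} {L c M N ξ ζ δ Q : ℝ} {j k : Fin 3}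

/-- A smooth mean-zero function `g` supported in `S` with `‖g‖ ≤ G` and `‖∂ⱼ(g (yₖ - aₖ))‖ ≤ D` in
`L²(S)` for all `a ∈ S`: the quantities entering the estimates for `segmentPairing`. -/
structure IsSegmentTest (S : Set E3) (g : E3 → ℝ) (G D : ℝ) : Prop where
  contDiff : ContDiff ℝ ∞ g
  tsupport_subset : tsupport g ⊆ S
  integral_eq_zero : ∫ x in S, g x = 0
  l2 : L2Le S g G
  l2_pd_mul : ∀ a ∈ S, ∀ j k, L2Le S (pd j fun y => g y * (y k - a k)) D

theorem IsSegmentTest.abs_integral_segmentPairing_pd_le {G D F₁ F₂ q : ℝ}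
    (hg : IsSegmentTest S g G D) (hconv : Convex ℝ S) (hρ : IsAveragingWeight S ρ L)
    (hF : ContDiff ℝ ∞ F) (hF₁ : L1Le S F F₁) (hF₂ : L2Le S F F₂) (hq : 0 < q)
    (hq2 : q ^ 2 ≤ 1 / 2) :
    |∫ t in (0 : ℝ)..1, segmentPairing S ρ g k (pd j F) t| ≤
      (L * √(8 * volume.real S) + 6) * (G * F₁ / q ^ 3 + q ^ 2 * (D * F₂)) := by
  obtain ⟨x, hx⟩ : S.Nonempty := Set.nonempty_iff_ne_empty.2 fun h => by
    simpa [h] using hρ.integral_eq_one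
  have hG := hg.l2.nonneg
  have hD := (hg.l2_pd_mul x hx 0 0).nonneg
  have hL := hρ.bound_nonneg
  have hF₁0 := hF₁.nonneg
  have hF₂0 := hF₂.nonneg
  refine (_root_.abs_integral_segmentPairing_pd_le hconv hρ hg.contDiff hg.tsupport_subset hF hg.l2
    hF₁ (fun a ha => hg.l2_pd_mul a ha j k) hF₂ hq hq2).trans ?_
  rw [mul_add]
  gcongr <;> linarith [Real.sqrt_nonneg (8 * volume.real S), mul_nonneg hL
    (Real.sqrt_nonneg (8 * volume.real S))]

theorem IsSegmentTest.abs_integral_segmentPairing_pd_le_of_l2Le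
    (hg : IsSegmentTest S g (c * N * ξ ^ 2) (c * N * ζ ^ 2)) (hconv : Convex ℝ S)
    (hρ : IsAveragingWeight S ρ L) (hF : ContDiff ℝ ∞ F) (hF₁ : L1Le S F (M * ζ ^ 2))
    (hF₂ : L2Le S F (M * ζ ^ 2)) (hc : 0 ≤ c) (hM : 0 ≤ M) (hN : 1 ≤ N) (hδ : 0 < δ)
    (hδ2 : δ ≤ 1 / 2) :
    |∫ t in (0 : ℝ)..1, segmentPairing S ρ g k (pd j F) t| ≤
      (L * √(8 * volume.real S) + 6) *
        (c * M * (N ^ 4 * ξ ^ 2 * ζ ^ 2 / δ ^ 3 + δ ^ 2 * ζ ^ 4)) := by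
  have hL := hρ.bound_nonneg
  have : 0 < N := by linarith
  have hq : δ / N ≤ 1 / 2 := (div_le_self hδ.le hN).trans hδ2
  refine (hg.abs_integral_segmentPairing_pd_le hconv hρ hF hF₁ hF₂ (q := δ / N) (by positivity)
    ((pow_le_pow_left₀ (by positivity) hq 2).trans (by norm_num))).trans ?_
  rw [mul_add (c * M)]
  gcongr ?_ * (?_ + ?_)
  · exact le_of_eq (by field_simp)
  · calc (δ / N) ^ 2 * (c * N * ζ ^ 2 * (M * ζ ^ 2)) = c * M * (δ ^ 2 * ζ ^ 4) / N := by field_simp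
      _ ≤ c * M * (δ ^ 2 * ζ ^ 4) := div_le_self (by positivity) hN

theorem IsSegmentTest.abs_integral_segmentPairing_pd_le_of_l1Le
    (hg : IsSegmentTest S g (c * N * ξ ^ 2) (c * N * ζ ^ 2)) (hconv : Convex ℝ S)
    (hρ : IsAveragingWeight S ρ L) (hF : ContDiff ℝ ∞ F) (hF₁ : L1Le S F (M * ξ ^ 4))
    (hF₂ : L2Le S F (M * Q)) (hc : 0 ≤ c) (hM : 0 ≤ M) (hN : 0 ≤ N) (hξ : 0 < ξ) (hξζ : ξ ≤ ζ)
    (hQ : 0 ≤ Q) :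
    |∫ t in (0 : ℝ)..1, segmentPairing S ρ g k (pd j F) t| ≤
      (L * √(8 * volume.real S) + 6) *
        (8 * (c * M * (N * ξ ^ 3 * ζ ^ 3 + N * ξ ^ 2 * Q))) := by
  have hL := hρ.bound_nonneg
  have hζ : 0 < ζ := hξ.trans_le hξζ
  have hq : ξ / (2 * ζ) ≤ 1 / 2 := by
    rw [div_le_iff₀ (by positivity)]
    linarith
  refine (hg.abs_integral_segmentPairing_pd_le hconv hρ hF hF₁ hF₂ (q := ξ / (2 * ζ))
    (by positivity) ((pow_le_pow_left₀ (by positivity) hq 2).trans (by norm_num))).trans ?_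
  gcongr
  calc c * N * ξ ^ 2 * (M * ξ ^ 4) / (ξ / (2 * ζ)) ^ 3 +
        (ξ / (2 * ζ)) ^ 2 * (c * N * ζ ^ 2 * (M * Q)) =
      8 * (c * M * (N * ξ ^ 3 * ζ ^ 3)) + 4⁻¹ * (c * M * (N * ξ ^ 2 * Q)) := by
        field_simp
        ring
    _ ≤ 8 * (c * M * (N * ξ ^ 3 * ζ ^ 3 + N * ξ ^ 2 * Q)) := by
        have : 0 ≤ c * M * (N * ξ ^ 2 * Q) := by positivity
        linarith

end SegmentTest

section CutoffFlux

variable {S : Set E3} {X Z Q A B r : ℝ} {v : Fin 3 → E3 → ℝ} {φ : E3 → ℝ}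

theorem tsupport_advect_subset : tsupport (advect v φ) ⊆ tsupport φ :=
  closure_minimal (fun x hx => by
    by_contra h
    exact hx (by simp [advect, pd_eq_zero_of_notMem_tsupport _ h])) (isClosed_tsupport φ)

theorem setIntegral_advect_eq_zero (hv : ∀ i, ContDiff ℝ ∞ (v i)) (hdiv : ∀ x, divField v x = 0)
    (hφ : ContDiff ℝ ∞ φ) (hS : IsCompact S) (hs : tsupport φ ⊆ S) :
    ∫ x in S, advect v φ x = 0 := by
  have h := setIntegral_mul_divField hφ hv hS hs
  simp_rw [hdiv, mul_zero, integral_zero] at h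
  rw [← neg_eq_zero, h, ← integral_finsetSum _ fun i _ =>
    integrableOn_of_isCompact hS (by fun_prop)]
  simp_rw [advect, mul_comm (v _ _)]

theorem FieldBounds.l2Le_advect (hv : FieldBounds S X Z Q v) (hφ : ContDiff ℝ ∞ φ) (hA0 : 0 ≤ A)
    (hA : ∀ i x, |pd i φ x| ≤ A) : L2Le S (advect v φ) (3 * (A * X)) := by
  have h := L2Le.sum (s := Finset.univ) (hv.l2 0).isCompact fun i _ =>
    (hv.l2 i).bdd_mul (by fun_prop) (fun x _ => hA i x) hA0
  have hsum : advect v φ = fun x => ∑ i, pd i φ x * v i x := by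
    ext x
    simp_rw [advect, mul_comm]
  rw [hsum]
  exact h.mono (by simp)

theorem FieldBounds.l2Le_pd_advect (hv : FieldBounds S X Z Q v) (hvs : ∀ i, ContDiff ℝ ∞ (v i))
    (hφ : ContDiff ℝ ∞ φ) (hA0 : 0 ≤ A) (hA : ∀ i x, |pd i φ x| ≤ A) (hB0 : 0 ≤ B)
    (hB : ∀ i j x, |pd i (pd j φ) x| ≤ B) (j : Fin 3) :
    L2Le S (pd j (advect v φ)) (3 * (B * X + A * Z)) := by
  have h := L2Le.sum (s := Finset.univ) (hv.l2 0).isCompact fun i _ =>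
    ((hv.l2 i).bdd_mul (by fun_prop) (fun x _ => hB j i x) hB0).add
      ((hv.grad j i).bdd_mul (by fun_prop) (fun x _ => hA i x) hA0)
  have hpd : pd j (advect v φ) =
      fun x => ∑ i, (pd j (pd i φ) x * v i x + pd i φ x * pd j (v i) x) := by
    ext x
    unfold advect
    rw [pd_sum_mul j (by fun_prop) (by fun_prop)]
    exact Finset.sum_congr rfl fun i _ => by ring
  rw [hpd]
  exact h.mono (by simp [mul_add])

theorem L2Le.pd_mul_coord {g : E3 → ℝ} {G D : ℝ} {a : E3} (hg : ContDiff ℝ ∞ g) (hG : L2Le S g G)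
    (j k : Fin 3) (hD : L2Le S (pd j g) D) (hr : 0 ≤ r) (ha : ∀ x ∈ S, ‖x - a‖ ≤ r) :
    L2Le S (pd j fun y => g y * (y k - a k)) (r * D + G) := by
  have hpd : (pd j fun y => g y * (y k - a k)) =
      fun x => (x k - a k) * pd j g x + (if j = k then 1 else 0) * g x := by
    ext x
    rw [pd_mul j (by fun_prop) (by fun_prop), pd_sub j (by fun_prop) (by fun_prop), pd_coord,
      pd_const]
    ring
  rw [hpd]
  exact (hD.bdd_mul (by fun_prop)
    (fun x hx => (abs_coord_le_norm (x - a) k).trans (ha x hx)) hr).add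
    ((hG.bdd_mul (b := 1) continuous_const (fun _ _ => by split_ifs <;> simp) zero_le_one).mono
      (one_mul G).le)

theorem FieldBounds.isSegmentTest_advect {c N : ℝ} (hv : FieldBounds S X Z Q v)
    (hvs : ∀ i, ContDiff ℝ ∞ (v i)) (hdiv : ∀ x, divField v x = 0) (hS : S ⊆ closedBall 0 2)
    (hφ : ContDiff ℝ ∞ φ) (hs : tsupport φ ⊆ S) (hc : 0 ≤ c) (hN : 1 ≤ N) (hXZ : N * X ≤ Z)
    (hA : ∀ i x, |pd i φ x| ≤ c * N) (hB : ∀ i j x, |pd i (pd j φ) x| ≤ c * N ^ 2) :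
    IsSegmentTest S (advect v φ) (27 * c * N * X) (27 * c * N * Z) := by
  have hX := (hv.l2 0).nonneg
  have hN0 : 0 ≤ N := by linarith
  have hG := hv.l2Le_advect hφ (by positivity) hA
  refine ⟨by fun_prop, tsupport_advect_subset.trans hs,
    setIntegral_advect_eq_zero hvs hdiv hφ (hv.l2 0).isCompact hs, hG.mono ?_,
    fun a ha j k => (hG.pd_mul_coord (by fun_prop) j k
      (hv.l2Le_pd_advect hvs hφ (by positivity) hA (by positivity) hB j) (r := 4) (by norm_num)
      fun x hx => ?_).mono ?_⟩
  · nlinarith [mul_nonneg (mul_nonneg hc hN0) hX]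
  · have hx' := mem_closedBall_zero_iff.1 (hS hx)
    have ha' := mem_closedBall_zero_iff.1 (hS ha)
    linarith [norm_sub_le x a]
  · have hB' : c * N ^ 2 * X ≤ c * N * Z :=
      calc c * N ^ 2 * X = c * N * (N * X) := by ring
        _ ≤ c * N * Z := by gcongr
    have hA' : c * N * X ≤ c * N * Z := by
      gcongr
      exact (le_mul_of_one_le_left hX hN).trans hXZ
    linarith

end CutoffFlux

section Pressure

/-- The skew-symmetric matrix field whose row divergence is the curl of `w`, with indices taken
modulo `3`. -/
def skewField (w : Fin 3 → E3 → ℝ) (j k : Fin 3) (x : E3) : ℝ :=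
  if j = k + 1 then w (k + 2) x else if j = k + 2 then -w (k + 1) x else 0

/-- The part of the momentum flux that is controlled by the energy. -/
def viscousFlux (κ : ℝ) (u w : Fin 3 → E3 → ℝ) (j k : Fin 3) (x : E3) : ℝ :=
  pd j (u k) x + κ * skewField w j k x

/-- The quadratic part of the momentum flux. -/
def convectiveFlux (u b : Fin 3 → E3 → ℝ) (j k : Fin 3) (x : E3) : ℝ :=
  b j x * b k x - u j x * u k x

variable {S : Set E3} {κ X Z Q : ℝ} {u w b : Fin 3 → E3 → ℝ} {P : E3 → ℝ}

@[fun_prop]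
theorem contDiff_skewField (hw : ∀ j, ContDiff ℝ ∞ (w j)) (j k : Fin 3) :
    ContDiff ℝ ∞ (skewField w j k) := by
  unfold skewField
  split_ifs <;> fun_prop

@[fun_prop]
theorem contDiff_viscousFlux (hu : ∀ j, ContDiff ℝ ∞ (u j)) (hw : ∀ j, ContDiff ℝ ∞ (w j))
    (j k : Fin 3) : ContDiff ℝ ∞ (viscousFlux κ u w j k) := by
  unfold viscousFlux
  fun_prop

@[fun_prop]
theorem contDiff_convectiveFlux (hu : ∀ j, ContDiff ℝ ∞ (u j)) (hb : ∀ j, ContDiff ℝ ∞ (b j))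
    (j k : Fin 3) : ContDiff ℝ ∞ (convectiveFlux u b j k) := by
  unfold convectiveFlux
  fun_prop

theorem sum_pd_skewField (w : Fin 3 → E3 → ℝ) (k : Fin 3) (x : E3) :
    ∑ j, pd j (skewField w j k) x = curlField w k x := by
  have hpd (j : Fin 3) : pd j (skewField w j k) x =
      if j = k + 1 then pd j (w (k + 2)) x else if j = k + 2 then -pd j (w (k + 1)) x else 0 := by
    unfold skewField
    split_ifs
    · rfl
    · exact pd_neg j _ x
    · exact pd_const j 0 x
  simp_rw [hpd, curlField, Fin.sum_univ_three]
  fin_cases k <;> simp <;> ring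

theorem L2Le.const_mul_skewField (hκw : ∀ j, L2Le S (fun x => κ * w j x) Z) (j k : Fin 3) :
    L2Le S (fun x => κ * skewField w j k x) Z := by
  have h := hκw 0
  unfold skewField
  split_ifs
  · exact hκw _
  · simpa only [mul_neg] using (hκw (k + 1)).neg
  · exact ⟨h.isCompact, by fun_prop, h.nonneg, by simpa using sq_nonneg Z⟩

theorem FieldBounds.l2Le_viscousFlux (hu : FieldBounds S X Z Q u)
    (hκw : ∀ j, L2Le S (fun x => κ * w j x) Z) (j k : Fin 3) :
    L2Le S (viscousFlux κ u w j k) (2 * Z) :=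
  ((hu.grad j k).add (L2Le.const_mul_skewField hκw j k)).mono (two_mul Z).ge

theorem FieldBounds.l1Le_convectiveFlux (hu : FieldBounds S X Z Q u) (hb : FieldBounds S X Z Q b)
    (j k : Fin 3) : L1Le S (convectiveFlux u b j k) (2 * X ^ 2) :=
  (((hb.l2 j).mul (hb.l2 k)).sub ((hu.l2 j).mul (hu.l2 k))).mono (by linarith [pow_two X])

theorem FieldBounds.l2Le_convectiveFlux (hu : FieldBounds S X Z Q u) (hb : FieldBounds S X Z Q b)
    (j k : Fin 3) : L2Le S (convectiveFlux u b j k) (2 * Q) :=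
  ((hb.mul hb j k).sub (hu.mul hu j k)).mono (two_mul Q).ge

theorem IsDilatedSolution.pd_pressure (hs : IsDilatedSolution κ u w b P) (k : Fin 3) (x : E3) :
    pd k P x = ∑ j, (pd j (viscousFlux κ u w j k) x + pd j (convectiveFlux u b j k) x) := by
  have hu := hs.smooth_u
  have hw := hs.smooth_w
  have hb := hs.smooth_b
  have hflux (j : Fin 3) : pd j (viscousFlux κ u w j k) x + pd j (convectiveFlux u b j k) x =
      pd j (pd j (u k)) x + κ * pd j (skewField w j k) x +
        (pd j (fun y => b j y * b k y) x - pd j (fun y => u j y * u k y) x) := by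
    unfold viscousFlux convectiveFlux
    rw [pd_add j (by fun_prop) (by fun_prop), pd_const_mul j κ (by fun_prop),
      pd_sub j (by fun_prop) (by fun_prop)]
  have hdiv {v : Fin 3 → E3 → ℝ} (hv : ∀ j, ContDiff ℝ ∞ (v j)) (hv0 : ∀ y, divField v y = 0) :
      ∑ j, pd j (fun y => v j y * v k y) x = advect v (v k) x := by
    have h := divField_mul (v := v) (f := v k) (by fun_prop) (by fun_prop) x
    rwa [hv0, zero_mul, zero_add] at h
  simp_rw [hflux, Finset.sum_add_distrib, Finset.sum_sub_distrib, ← Finset.mul_sum]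
  rw [hdiv hu hs.div_u, hdiv hb hs.div_b, sum_pd_skewField, hs.eq_u, lap]
  ring

theorem IsDilatedSolution.setIntegral_pressure_mul_eq {ρ g : E3 → ℝ} {L : ℝ}
    (hs : IsDilatedSolution κ u w b P) (hS : IsCompact S) (hρ : IsAveragingWeight S ρ L)
    (hg : Continuous g) (hg0 : ∫ x in S, g x = 0) :
    ∫ x in S, P x * g x = ∑ k, ∑ j,
      ((∫ t in (0 : ℝ)..1, segmentPairing S ρ g k (pd j (viscousFlux κ u w j k)) t) +
        ∫ t in (0 : ℝ)..1, segmentPairing S ρ g k (pd j (convectiveFlux u b j k)) t) := by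
  have hu := hs.smooth_u
  have hw := hs.smooth_w
  have hb := hs.smooth_b
  have hρc := hρ.contDiff.continuous
  rw [setIntegral_mul_eq_sum_segmentPairing hS hρ hg hg0 hs.smooth_P]
  refine Finset.sum_congr rfl fun k _ => ?_
  rw [funext (hs.pd_pressure k), integral_segmentPairing_sum hS hρc hg _ fun j => by fun_prop]
  exact Finset.sum_congr rfl fun j _ =>
    integral_segmentPairing_add hS hρc hg (by fun_prop) (by fun_prop)

theorem L2Le.l1Le {f : E3 → ℝ} (hf : L2Le S f Z) : L1Le S f (Z * (volume.real S + 1)) := by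
  have hV : 0 ≤ volume.real S := measureReal_nonneg
  have hone : L2Le S (fun _ => (1 : ℝ)) (volume.real S + 1) :=
    ⟨hf.isCompact, continuous_const, by positivity, by simp; nlinarith⟩
  simpa using hf.mul hone

theorem IsDilatedSolution.setIntegral_pressure_mul_le {ρ g : E3 → ℝ} {L c N ξ ζ δ : ℝ}
    (hs : IsDilatedSolution κ u w b P) (hconv : Convex ℝ S) (hρ : IsAveragingWeight S ρ L)
    (hg : IsSegmentTest S g (c * N * ξ ^ 2) (c * N * ζ ^ 2)) (hc : 0 ≤ c) (hN : 1 ≤ N)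
    (hξ : 0 < ξ) (hξζ : ξ ≤ ζ) (hδ : 0 < δ) (hδ2 : δ ≤ 1 / 2)
    (hu : FieldBounds S (ξ ^ 2) (ζ ^ 2) Q u) (hb : FieldBounds S (ξ ^ 2) (ζ ^ 2) Q b)
    (hκw : ∀ j, L2Le S (fun x => κ * w j x) (ζ ^ 2)) :
    ∫ x in S, P x * g x ≤ 144 * ((L * √(8 * volume.real S) + 6) * (volume.real S + 1)) * c *
      (N ^ 4 * ξ ^ 2 * ζ ^ 2 / δ ^ 3 + δ ^ 2 * ζ ^ 4 + N * ξ ^ 3 * ζ ^ 3 + N * ξ ^ 2 * Q) := by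
  have hus := hs.smooth_u
  have hws := hs.smooth_w
  have hbs := hs.smooth_b
  have hL := hρ.bound_nonneg
  have hQ := (hu.sq 0).nonneg
  have hζ : 0 < ζ := hξ.trans_le hξζ
  have hV : 0 ≤ volume.real S := measureReal_nonneg
  set V := volume.real S
  have hvisc (j k : Fin 3) := hg.abs_integral_segmentPairing_pd_le_of_l2Le (M := 2 * (V + 1))
    (k := k) (j := j) hconv hρ (contDiff_viscousFlux hus hws j k)
    ((hu.l2Le_viscousFlux hκw j k).l1Le.mono (by linarith))
    ((hu.l2Le_viscousFlux hκw j k).mono (by nlinarith [sq_nonneg ζ])) hc (by positivity) hN hδ hδ2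
  have hconvec (j k : Fin 3) := hg.abs_integral_segmentPairing_pd_le_of_l1Le (M := 2) (k := k)
    (j := j) hconv hρ (contDiff_convectiveFlux hus hbs j k)
    ((hu.l1Le_convectiveFlux hb j k).mono (by linarith [pow_mul ξ 2 2]))
    (hu.l2Le_convectiveFlux hb j k) hc zero_le_two (by linarith) hξ hξζ hQ
  rw [hs.setIntegral_pressure_mul_eq hg.l2.isCompact hρ hg.contDiff.continuous hg.integral_eq_zero]
  refine (Finset.sum_le_sum fun k _ => Finset.sum_le_sum fun j _ =>
    add_le_add ((le_abs_self _).trans (hvisc j k)) ((le_abs_self _).trans (hconvec j k))).trans ?_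
  simp only [Finset.sum_const, Finset.card_univ, Fintype.card_fin, nsmul_eq_mul, Nat.cast_ofNat]
  set A := N ^ 4 * ξ ^ 2 * ζ ^ 2 / δ ^ 3 + δ ^ 2 * ζ ^ 4
  set B := N * ξ ^ 3 * ζ ^ 3 + N * ξ ^ 2 * Q
  have hA : 0 ≤ A := by positivity
  have hB : 0 ≤ B := by positivity
  calc _ = (L * √(8 * V) + 6) * c * (18 * (V + 1) * A + 144 * B) := by ring
    _ ≤ (L * √(8 * V) + 6) * c * (144 * (V + 1) * (A + B)) := by
        gcongr
        nlinarith [mul_nonneg hV hA, mul_nonneg hV hB]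
    _ = _ := by ring

end Pressure

theorem exists_pressure_bound : ∃ C₀ : ℝ, 0 ≤ C₀ ∧ ∀ {S : Set E3}, Convex ℝ S →
    closedBall 0 1 ⊆ S → S ⊆ closedBall 0 2 → ∀ {κ c N ξ ζ Q δ : ℝ} {u w b : Fin 3 → E3 → ℝ}
    {P φ : E3 → ℝ}, IsDilatedSolution κ u w b P → ContDiff ℝ ∞ φ → tsupport φ ⊆ S → 0 ≤ c →
    1 ≤ N → 0 < ξ → 0 < ζ → N * ξ ^ 2 ≤ ζ ^ 2 → 0 < δ → δ ≤ 1 / 2 →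
    (∀ i x, |pd i φ x| ≤ c * N) → (∀ i j x, |pd i (pd j φ) x| ≤ c * N ^ 2) →
    FieldBounds S (ξ ^ 2) (ζ ^ 2) Q u → FieldBounds S (ξ ^ 2) (ζ ^ 2) Q b →
    (∀ j, L2Le S (fun x => κ * w j x) (ζ ^ 2)) →
    ∫ x in S, P x * advect u φ x ≤ C₀ * c *
      (N ^ 4 * ξ ^ 2 * ζ ^ 2 / δ ^ 3 + δ ^ 2 * ζ ^ 4 + N * ξ ^ 3 * ζ ^ 3 + N * ξ ^ 2 * Q) := by
  obtain ⟨ρ, L, hρ⟩ := exists_isAveragingWeight one_pos 2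
  have hL := (hρ _ subset_rfl (closedBall_subset_closedBall one_le_two)).bound_nonneg
  set V := volume.real (closedBall (0 : E3) 2)
  refine ⟨144 * ((L * √(8 * V) + 6) * (V + 1)) * 27, by positivity, ?_⟩
  intro S hconv hS1 hS2 κ c N ξ ζ Q δ u w b P φ hs hφ hφs hc hN hξ hζ hXZ hδ hδ2 hA hB hu hb hκw
  have hξζ : ξ ≤ ζ := (pow_le_pow_iff_left₀ hξ.le hζ.le two_ne_zero).1
    ((le_mul_of_one_le_left (sq_nonneg ξ) hN).trans hXZ)
  have hQ := (hu.sq 0).nonneg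
  have hVS : volume.real S ≤ V := measureReal_mono hS2 measure_closedBall_lt_top.ne
  have htest := hu.isSegmentTest_advect hs.smooth_u hs.div_u hS2 hφ hφs hc hN hXZ hA hB
  refine (hs.setIntegral_pressure_mul_le hconv (hρ S hS1 hS2) htest (by positivity) hN hξ hξζ hδ
    hδ2 hu hb hκw).trans ?_
  rw [← mul_assoc _ 27 c]
  gcongr

section EnergyDensity

variable {K : Set E3} {κ r s Z : ℝ} {u w b : Fin 3 → E3 → ℝ} {P φ : E3 → ℝ}

theorem gradEnergy_nonneg (v : Fin 3 → E3 → ℝ) (x : E3) : 0 ≤ gradEnergy v x := by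
  unfold gradEnergy
  positivity

theorem sq_pd_le_gradEnergy (v : Fin 3 → E3 → ℝ) (i j : Fin 3) (x : E3) :
    pd i (v j) x ^ 2 ≤ gradEnergy v x :=
  (Finset.single_le_sum (f := fun j => pd i (v j) x ^ 2) (fun _ _ => sq_nonneg _)
    (Finset.mem_univ j)).trans
    (Finset.single_le_sum (f := fun i => ∑ j, pd i (v j) x ^ 2) (fun _ _ => by positivity)
      (Finset.mem_univ i))

/-- The energy density of a solution of the system dilated by `κ`. -/
def energyDensity (κ : ℝ) (u w b : Fin 3 → E3 → ℝ) (x : E3) : ℝ :=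
  gradEnergy u x + gradEnergy w x + gradEnergy b x + ∑ j, (κ * w j x) ^ 2

theorem energyDensity_nonneg (x : E3) : 0 ≤ energyDensity κ u w b x := by
  have hu := gradEnergy_nonneg u x
  have hw := gradEnergy_nonneg w x
  have hb := gradEnergy_nonneg b x
  unfold energyDensity
  positivity

theorem IsDilatedSolution.continuous_energyDensity (hs : IsDilatedSolution κ u w b P) :
    Continuous (energyDensity κ u w b) := by
  have hu := hs.smooth_u
  have hw := hs.smooth_w
  have hb := hs.smooth_b
  unfold energyDensity gradEnergy
  fun_prop

theorem sq_pd_le_energyDensity (i j : Fin 3) (x : E3) :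
    pd i (u j) x ^ 2 ≤ energyDensity κ u w b x ∧ pd i (w j) x ^ 2 ≤ energyDensity κ u w b x ∧
      pd i (b j) x ^ 2 ≤ energyDensity κ u w b x := by
  have hu := gradEnergy_nonneg u x
  have hw := gradEnergy_nonneg w x
  have hb := gradEnergy_nonneg b x
  have hκw : 0 ≤ ∑ j, (κ * w j x) ^ 2 := by positivity
  unfold energyDensity
  refine ⟨?_, ?_, ?_⟩ <;>
    linarith [sq_pd_le_gradEnergy u i j x, sq_pd_le_gradEnergy w i j x, sq_pd_le_gradEnergy b i j x]

theorem sq_const_mul_le_energyDensity (j : Fin 3) (x : E3) :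
    (κ * w j x) ^ 2 ≤ energyDensity κ u w b x := by
  have hj := Finset.single_le_sum (f := fun j => (κ * w j x) ^ 2) (fun _ _ => sq_nonneg _)
    (Finset.mem_univ j)
  unfold energyDensity
  linarith [gradEnergy_nonneg u x, gradEnergy_nonneg w x, gradEnergy_nonneg b x]

theorem IsDilatedSolution.setIntegral_energyDensity_le (hs : IsDilatedSolution κ u w b P)
    (hφ : Continuous φ) (hφ0 : ∀ x, 0 ≤ φ x) (hφ1 : ∀ x ∈ closedBall (0 : E3) r, φ x = 1)
    (hrs : r ≤ s) :
    ∫ x in closedBall (0 : E3) r, energyDensity κ u w b x ≤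
      3 * ∫ x in closedBall (0 : E3) s, φ x * (3⁻¹ * gradEnergy u x + gradEnergy w x +
        gradEnergy b x + 2⁻¹ * ∑ j, (κ * w j x) ^ 2) := by
  have hu := hs.smooth_u
  have hw := hs.smooth_w
  have hb := hs.smooth_b
  have hgu := gradEnergy_nonneg u
  have hgw := gradEnergy_nonneg w
  have hgb := gradEnergy_nonneg b
  set e := fun x => 3 * (φ x * (3⁻¹ * gradEnergy u x + gradEnergy w x + gradEnergy b x +
    2⁻¹ * ∑ j, (κ * w j x) ^ 2))
  have he : Continuous e := by
    unfold e gradEnergy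
    fun_prop
  rw [← integral_const_mul]
  calc _ ≤ ∫ x in closedBall (0 : E3) r, e x :=
        setIntegral_mono_of_isCompact (isCompact_closedBall _ _) hs.continuous_energyDensity he
          fun x hx => by
            have hκw : 0 ≤ ∑ j, (κ * w j x) ^ 2 := by positivity
            simp only [e, hφ1 x hx, energyDensity]
            linarith [hgw x, hgb x]
    _ ≤ ∫ x in closedBall (0 : E3) s, e x :=
        setIntegral_mono_set_of_isCompact (isCompact_closedBall _ _) he (fun x => by
          have h0 := hφ0 x
          have h1 := hgu x
          have h2 := hgw x
          have h3 := hgb x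
          positivity) (closedBall_subset_closedBall hrs)

end EnergyDensity

section Caccioppoli

theorem exists_fieldBounds : ∃ S : ℝ, 0 ≤ S ∧ ∀ {r s ξ ζ : ℝ} {v : Fin 3 → E3 → ℝ}, 0 ≤ r → r < s →
    0 ≤ ξ → 0 ≤ ζ → ξ ^ 2 / (s - r) ≤ ζ ^ 2 → (∀ j, ContDiff ℝ ∞ (v j)) →
    (∀ j, L2Le (closedBall 0 s) (v j) (ξ ^ 2)) →
    (∀ i j, L2Le (closedBall 0 s) (pd i (v j)) (ζ ^ 2)) →
    FieldBounds (closedBall 0 r) (ξ ^ 2) (ζ ^ 2) (S * (ξ * ζ ^ 3)) v := by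
  obtain ⟨S, hS0, hS⟩ := exists_setIntegral_pow_four_le
  refine ⟨√S, Real.sqrt_nonneg S, fun {r s ξ ζ v} hr hrs hξ hζ hξζ hv hX hZ => ?_⟩
  have hK : IsCompact (closedBall (0 : E3) r) := isCompact_closedBall _ _
  have hsub : closedBall (0 : E3) r ⊆ closedBall 0 s := closedBall_subset_closedBall hrs.le
  refine ⟨fun j => (hX j).mono_set hK hsub, fun i j => (hZ i j).mono_set hK hsub, fun j =>
    ⟨hK, (hX j).continuous.pow 2, by positivity, ?_⟩⟩
  simp_rw [← pow_mul]
  refine (hS r s hr hrs _ _ _ (hv j) hξζ (hX j) (hZ · j)).trans_eq ?_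
  rw [mul_pow, Real.sq_sqrt hS0]
  ring

theorem exists_setIntegral_energyDensity_le_of_fieldBounds : ∃ A : ℝ, 0 ≤ A ∧
    ∀ {κ c r s N ξ ζ Q δ : ℝ} {u w b : Fin 3 → E3 → ℝ} {P φ : E3 → ℝ},
    IsDilatedSolution κ u w b P → 1 ≤ r → r < s → s ≤ 2 → N = (s - r)⁻¹ → 1 ≤ c →
    IsCutoff r s c φ → 0 < ξ → 0 < ζ → N * ξ ^ 2 ≤ ζ ^ 2 → 0 < δ → δ ≤ 1 / 2 →
    FieldBounds (closedBall 0 s) (ξ ^ 2) (ζ ^ 2) Q u →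
    FieldBounds (closedBall 0 s) (ξ ^ 2) (ζ ^ 2) Q w →
    FieldBounds (closedBall 0 s) (ξ ^ 2) (ζ ^ 2) Q b →
    (∀ j, L2Le (closedBall 0 s) (fun x => κ * w j x) (ζ ^ 2)) →
    ∫ x in closedBall (0 : E3) r, energyDensity κ u w b x ≤ A * c *
      (N ^ 4 * ξ ^ 2 * ζ ^ 2 / δ ^ 3 + δ ^ 2 * ζ ^ 4 + N * ξ ^ 3 * ζ ^ 3 + N * ξ ^ 2 * Q) := by
  obtain ⟨C, hC, hpressure⟩ := exists_pressure_bound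
  refine ⟨144 + 3 * C, by positivity, ?_⟩
  intro κ c r s N ξ ζ Q δ u w b P φ hs hr hrs hs2 hN hc hφ hξ hζ hξζ hδ hδ2 hu hw hb hκw
  have hφs : ContDiff ℝ ∞ φ := hφ.contDiff
  have hN1 : 1 ≤ N := by
    rw [hN, one_le_inv₀ (by linarith)]
    linarith
  have hQ := (hu.sq 0).nonneg
  have hpd (i : Fin 3) (x : E3) : |pd i φ x| ≤ c * N := by
    simpa only [hN, div_eq_mul_inv] using hφ.abs_pd_le i x
  have hpd2 (i j : Fin 3) (x : E3) : |pd i (pd j φ) x| ≤ c * N ^ 2 := by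
    simpa only [hN, div_eq_mul_inv, inv_pow] using hφ.abs_pd_pd_le i j x
  have hP := hpressure (convex_closedBall _ _) (closedBall_subset_closedBall (hr.trans hrs.le))
    (closedBall_subset_closedBall hs2) hs hφs hφ.tsupport_subset (by linarith) hN1 hξ hζ hξζ hδ hδ2
    hpd hpd2 hu hb hκw
  have hflux := sum_setIntegral_mul_le (fun i => by fun_prop) (by positivity) hpd
    (L1Le.energyFlux hu hw hb hκw)
  have henergy := hs.setIntegral_mul_energy_le hφs hφ.nonneg (isCompact_closedBall _ _)
    hφ.tsupport_subset
  have hδ3 : N * ξ ^ 2 * ζ ^ 2 ≤ N ^ 4 * ξ ^ 2 * ζ ^ 2 / δ ^ 3 := by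
    rw [le_div_iff₀ (by positivity)]
    refine (mul_le_of_le_one_right (by positivity) (pow_le_one₀ hδ.le (by linarith))).trans ?_
    gcongr
    exact le_self_pow₀ hN1 (by norm_num)
  have hrest : 0 ≤ δ ^ 2 * ζ ^ 4 + N * ξ ^ 3 * ζ ^ 3 := by positivity
  refine (hs.setIntegral_energyDensity_le hφs.continuous hφ.nonneg hφ.eq_one hrs.le).trans ?_
  set F := N ^ 4 * ξ ^ 2 * ζ ^ 2 / δ ^ 3
  calc _ ≤ 3 * (3 * (c * N * (16 * (ξ ^ 2 * ζ ^ 2) + 8 * (ξ ^ 2 * Q))) +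
        C * c * (F + δ ^ 2 * ζ ^ 4 + N * ξ ^ 3 * ζ ^ 3 + N * ξ ^ 2 * Q)) :=
        mul_le_mul_of_nonneg_left (henergy.trans (add_le_add hflux hP)) zero_le_three
    _ = 144 * c * (N * ξ ^ 2 * ζ ^ 2 + 2⁻¹ * (N * ξ ^ 2 * Q)) +
        3 * C * c * (F + δ ^ 2 * ζ ^ 4 + N * ξ ^ 3 * ζ ^ 3 + N * ξ ^ 2 * Q) := by ring
    _ ≤ 144 * c * (F + δ ^ 2 * ζ ^ 4 + N * ξ ^ 3 * ζ ^ 3 + N * ξ ^ 2 * Q) +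
        3 * C * c * (F + δ ^ 2 * ζ ^ 4 + N * ξ ^ 3 * ζ ^ 3 + N * ξ ^ 2 * Q) := by
        have hcross : 0 ≤ N * ξ ^ 2 * Q := by positivity
        refine add_le_add_left (mul_le_mul_of_nonneg_left ?_ (by positivity)) _
        linarith
    _ = _ := by ring

theorem exists_caccioppoli : ∃ A : ℝ, 0 ≤ A ∧
    ∀ {κ r s N ξ ζ δ : ℝ} {u w b : Fin 3 → E3 → ℝ} {P : E3 → ℝ},
    IsDilatedSolution κ u w b P → 1 ≤ r → r < s → s ≤ 2 → N = 2 / (s - r) → 0 < ξ → 0 < ζ →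
    N * ξ ^ 2 ≤ ζ ^ 2 → 0 < δ → δ ≤ 1 / 2 →
    (∀ j, L2Le (closedBall 0 s) (u j) (ξ ^ 2)) → (∀ j, L2Le (closedBall 0 s) (w j) (ξ ^ 2)) →
    (∀ j, L2Le (closedBall 0 s) (b j) (ξ ^ 2)) →
    ∫ x in closedBall (0 : E3) s, energyDensity κ u w b x ≤ ζ ^ 4 →
    ∫ x in closedBall (0 : E3) r, energyDensity κ u w b x ≤
      A * (N ^ 4 * ξ ^ 2 * ζ ^ 2 / δ ^ 3 + δ ^ 2 * ζ ^ 4 + N * ξ ^ 3 * ζ ^ 3) := by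
  obtain ⟨c, hc, hcutoff⟩ := exists_isCutoff
  obtain ⟨S, hS0, hS⟩ := exists_fieldBounds
  obtain ⟨A, hA, henergy⟩ := exists_setIntegral_energyDensity_le_of_fieldBounds
  refine ⟨A * c * (S + 1), by positivity, ?_⟩
  intro κ r s N ξ ζ δ u w b P hs hr hrs hs2 hN hξ hζ hξζ hδ hδ2 hu hw hb hE
  have hsu := hs.smooth_u
  have hsw := hs.smooth_w
  have hsb := hs.smooth_b
  have hK : IsCompact (closedBall (0 : E3) s) := isCompact_closedBall _ _
  have hN0 : 0 < N := hN ▸ div_pos two_pos (sub_pos.2 hrs)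
  set m := (r + s) / 2 with hm
  have hms : m < s := by linarith
  have hinv : (s - m)⁻¹ = N ∧ N = (m - r)⁻¹ := by
    rw [hN, ← inv_div, hm]
    constructor <;> ring_nf
  have hl2 {f : E3 → ℝ} (hf : Continuous f) (h : ∀ x, f x ^ 2 ≤ energyDensity κ u w b x) :
      L2Le (closedBall 0 s) f (ζ ^ 2) :=
    .of_sq_le hK hf hs.continuous_energyDensity (fun x _ => h x) (by positivity)
      (hE.trans_eq (by ring))
  have hξζ' : ξ ^ 2 / (s - m) ≤ ζ ^ 2 := by rwa [div_eq_inv_mul, hinv.1]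
  have hbounds {v : Fin 3 → E3 → ℝ} (hv : ∀ j, ContDiff ℝ ∞ (v j))
      (hX : ∀ j, L2Le (closedBall 0 s) (v j) (ξ ^ 2))
      (hZ : ∀ i j x, pd i (v j) x ^ 2 ≤ energyDensity κ u w b x) :=
    hS (by linarith : 0 ≤ m) hms hξ.le hζ.le hξζ' hv hX fun i j => hl2 (by fun_prop) (hZ i j)
  refine (henergy hs hr (by linarith) (by linarith) hinv.2 hc (hcutoff r m (by linarith)
    (by linarith)) hξ hζ hξζ hδ hδ2 (hbounds hsu hu fun i j x => (sq_pd_le_energyDensity i j x).1)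
    (hbounds hsw hw fun i j x => (sq_pd_le_energyDensity i j x).2.1)
    (hbounds hsb hb fun i j x => (sq_pd_le_energyDensity i j x).2.2)
    fun j => (hl2 (by fun_prop) (sq_const_mul_le_energyDensity j)).mono_set
      (isCompact_closedBall _ _) (closedBall_subset_closedBall hms.le)).trans ?_
  rw [mul_assoc (A * c)]
  gcongr
  have hrest : 0 ≤ S * (N ^ 4 * ξ ^ 2 * ζ ^ 2 / δ ^ 3 + δ ^ 2 * ζ ^ 4) := by positivity
  linarith

end Caccioppoli

section HoleFilling

theorem mul_sq_le_young {a z ε : ℝ} (hε : 0 < ε) :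
    a * z ^ 2 ≤ ε * z ^ 4 + a ^ 2 / (4 * ε) := by
  have hsq : ε * z ^ 4 + a ^ 2 / (4 * ε) - a * z ^ 2 = (2 * ε * z ^ 2 - a) ^ 2 / (4 * ε) := by
    field_simp
    ring
  linarith [div_nonneg (sq_nonneg (2 * ε * z ^ 2 - a)) (by positivity : 0 ≤ 4 * ε)]

theorem mul_cube_le_young {a z ε : ℝ} (ha : 0 ≤ a) (hz : 0 ≤ z) (hε : 0 < ε) :
    a * z ^ 3 ≤ ε * z ^ 4 + a ^ 4 / ε ^ 3 := by
  rcases le_total a (ε * z) with h | h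
  · calc a * z ^ 3 ≤ ε * z * z ^ 3 := by gcongr
      _ = ε * z ^ 4 := by ring
      _ ≤ _ := le_add_of_nonneg_right (by positivity)
  · have hza : z ≤ a / ε := by rwa [le_div_iff₀' hε]
    calc a * z ^ 3 ≤ a * (a / ε) ^ 3 := by gcongr
      _ = a ^ 4 / ε ^ 3 := by ring
      _ ≤ _ := le_add_of_nonneg_left (by positivity)

theorem absorb_caccioppoli_errors {A δ N ξ ζ E F : ℝ} (hA : 0 ≤ A) (hδ : 0 < δ) (hN : 1 ≤ N)
    (hξ : 0 ≤ ξ) (hζ : 0 ≤ ζ) (hAδ : A * δ ^ 2 ≤ 1 / 12)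
    (hE : ζ ^ 4 ≤ 2 * E + 2 * N ^ 2 * ξ ^ 4)
    (hF : F ≤ A * (N ^ 4 * ξ ^ 2 * ζ ^ 2 / δ ^ 3 + δ ^ 2 * ζ ^ 4 + N * ξ ^ 3 * ζ ^ 3)) :
    F ≤ 2⁻¹ * E + (1 + 3 * A ^ 2 / δ ^ 6 + 1728 * A ^ 4) * N ^ 8 * (ξ ^ 4 + ξ ^ 12) := by
  have hquad := mul_sq_le_young (a := A * N ^ 4 * ξ ^ 2 / δ ^ 3) (z := ζ) (ε := 1 / 12)
    (by norm_num)
  have hcube := mul_cube_le_young (a := A * N * ξ ^ 3) (ε := 1 / 12) (by positivity) hζ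
    (by norm_num)
  have hδζ : A * δ ^ 2 * ζ ^ 4 ≤ 1 / 12 * ζ ^ 4 := by gcongr
  have hN2 : N ^ 2 ≤ N ^ 8 := pow_le_pow_right₀ hN (by norm_num)
  have hN4 : N ^ 4 ≤ N ^ 8 := pow_le_pow_right₀ hN (by norm_num)
  calc F ≤ A * N ^ 4 * ξ ^ 2 / δ ^ 3 * ζ ^ 2 + A * δ ^ 2 * ζ ^ 4 + A * N * ξ ^ 3 * ζ ^ 3 :=
        hF.trans_eq (by ring)
    _ ≤ 1 / 4 * ζ ^ 4 + 3 * (A * N ^ 4 * ξ ^ 2 / δ ^ 3) ^ 2 + 1728 * (A * N * ξ ^ 3) ^ 4 :=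
        (add_le_add (add_le_add hquad hδζ) hcube).trans_eq (by ring)
    _ ≤ 1 / 4 * (2 * E + 2 * N ^ 2 * ξ ^ 4) + 3 * (A * N ^ 4 * ξ ^ 2 / δ ^ 3) ^ 2 +
        1728 * (A * N * ξ ^ 3) ^ 4 := by gcongr
    _ = 2⁻¹ * E + (2⁻¹ * N ^ 2 * ξ ^ 4 + 3 * A ^ 2 / δ ^ 6 * N ^ 8 * ξ ^ 4 +
        1728 * A ^ 4 * N ^ 4 * ξ ^ 12) := by
        field_simp
        ring
    _ ≤ 2⁻¹ * E + (1 * N ^ 8 * (ξ ^ 4 + ξ ^ 12) + 3 * A ^ 2 / δ ^ 6 * N ^ 8 * (ξ ^ 4 + ξ ^ 12) +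
        1728 * A ^ 4 * N ^ 8 * (ξ ^ 4 + ξ ^ 12)) := by
        gcongr
        · norm_num
        all_goals
          have hξ4 : 0 ≤ ξ ^ 4 := by positivity
          have hξ12 : 0 ≤ ξ ^ 12 := by positivity
          linarith
    _ = _ := by ring

theorem exists_pow_four_between {E Y : ℝ} (hE : 0 ≤ E) (hY : 0 < Y) :
    ∃ ζ : ℝ, 0 < ζ ∧ Y ≤ ζ ^ 2 ∧ E ≤ ζ ^ 4 ∧ ζ ^ 4 ≤ 2 * E + 2 * Y ^ 2 := by
  have hζ2 : √(√E + Y) ^ 2 = √E + Y := Real.sq_sqrt (by positivity)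
  have hζ4 : √(√E + Y) ^ 4 = E + 2 * √E * Y + Y ^ 2 := by
    rw [show √(√E + Y) ^ 4 = (√(√E + Y) ^ 2) ^ 2 by ring, hζ2, add_sq, Real.sq_sqrt hE]
  refine ⟨√(√E + Y), Real.sqrt_pos.2 (by positivity), ?_, ?_, ?_⟩
  · rw [hζ2]
    exact le_add_of_nonneg_left (Real.sqrt_nonneg E)
  · rw [hζ4, add_assoc]
    exact le_add_of_nonneg_right (by positivity)
  · linarith [two_mul_le_add_sq √E Y, Real.sq_sqrt hE]

theorem exists_holeFilling_step : ∃ C : ℝ, 0 ≤ C ∧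
    ∀ {κ X r s : ℝ} {u w b : Fin 3 → E3 → ℝ} {P : E3 → ℝ},
    IsDilatedSolution κ u w b P → 0 < X → 1 ≤ r → r < s → s ≤ 2 →
    (∀ j, L2Le (closedBall 0 s) (u j) X) → (∀ j, L2Le (closedBall 0 s) (w j) X) →
    (∀ j, L2Le (closedBall 0 s) (b j) X) →
    ∫ x in closedBall (0 : E3) r, energyDensity κ u w b x ≤
      2⁻¹ * (∫ x in closedBall (0 : E3) s, energyDensity κ u w b x) +
        C * (X ^ 2 + X ^ 6) / (s - r) ^ 8 := by
  obtain ⟨A, hA, hcaccioppoli⟩ := exists_caccioppoli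
  obtain ⟨δ, hδ0, hδ2, hAδ⟩ : ∃ δ : ℝ, 0 < δ ∧ δ ≤ 1 / 2 ∧ A * δ ^ 2 ≤ 1 / 12 := by
    refine ⟨1 / (2 + 12 * A), by positivity, one_div_le_one_div_of_le two_pos (by linarith), ?_⟩
    rw [one_div, inv_pow, ← div_eq_mul_inv, div_le_iff₀ (by positivity)]
    linarith [sq_nonneg A]
  refine ⟨256 * (1 + 3 * A ^ 2 / δ ^ 6 + 1728 * A ^ 4), by positivity, ?_⟩
  intro κ X r s u w b P hs hX hr hrs hs2 hu hw hb
  obtain ⟨ξ, hξ, rfl⟩ : ∃ ξ : ℝ, 0 < ξ ∧ X = ξ ^ 2 :=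
    ⟨√X, Real.sqrt_pos.2 hX, (Real.sq_sqrt hX.le).symm⟩
  obtain ⟨N, hN⟩ : ∃ N, N = 2 / (s - r) := ⟨_, rfl⟩
  have hN1 : 1 ≤ N := by
    rw [hN, le_div_iff₀ (sub_pos.2 hrs)]
    linarith
  set E := ∫ x in closedBall (0 : E3) s, energyDensity κ u w b x
  obtain ⟨ζ, hζ, hNζ, hEζ, hζE⟩ := exists_pow_four_between
    (integral_nonneg energyDensity_nonneg : 0 ≤ E) (by positivity : 0 < N * ξ ^ 2)
  refine (absorb_caccioppoli_errors hA hδ0 hN1 hξ.le hζ.le hAδ (hζE.trans_eq (by ring))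
    (hcaccioppoli hs hr hrs hs2 hN hξ hζ hNζ hδ0 hδ2 hu hw hb hEζ)).trans_eq ?_
  rw [hN, div_pow]
  generalize (s - r) ^ 8 = d
  ring

theorem three_fourths_le_one_sub_inv_pow (k : ℕ) : 3 / 4 ≤ (1 - (4 * (k + 1) : ℝ)⁻¹) ^ k := by
  have hk : k * (4 * (k + 1) : ℝ)⁻¹ ≤ 1 / 4 := by
    rw [← div_eq_mul_inv, div_le_iff₀ (by positivity)]
    linarith
  have hinv : (4 * (k + 1) : ℝ)⁻¹ ≤ 1 :=
    inv_le_one_of_one_le₀ (by linarith [k.cast_nonneg (α := ℝ)])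
  have hbernoulli := one_add_mul_le_pow (a := -(4 * (k + 1) : ℝ)⁻¹) (by linarith) k
  rw [← sub_eq_add_neg] at hbernoulli
  linarith

theorem half_mul_add_le {k : ℕ} {a d D : ℝ} (ha : a = 4 * (k + 1)) (hd : 0 < d) (hD : 0 ≤ D) :
    2⁻¹ * (3 * a ^ k * D / ((1 - a⁻¹) * d) ^ k) + D / (a⁻¹ * d) ^ k ≤ 3 * a ^ k * D / d ^ k := by
  have ha0 : 0 < a := ha ▸ by positivity
  have hτ : 3 / 4 ≤ (1 - a⁻¹) ^ k := ha ▸ three_fourths_le_one_sub_inv_pow k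
  rw [mul_pow, mul_pow, inv_pow]
  calc _ ≤ 2⁻¹ * (3 * a ^ k * D / (3 / 4 * d ^ k)) + D / ((a ^ k)⁻¹ * d ^ k) := by gcongr
    _ = _ := by
      field_simp
      ring

theorem le_of_le_half_add {k : ℕ} {f : ℝ → ℝ} {D F r₀ r₁ : ℝ} (hD : 0 ≤ D) (h01 : r₀ < r₁)
    (hF : ∀ r, r₀ ≤ r → r < r₁ → f r ≤ F)
    (hf : ∀ r s, r₀ ≤ r → r < s → s < r₁ → f r ≤ 2⁻¹ * f s + D / (s - r) ^ k) :
    f r₀ ≤ 3 * (4 * (k + 1)) ^ k * D / (r₁ - r₀) ^ k := by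
  obtain ⟨a, ha⟩ : ∃ a : ℝ, a = 4 * (k + 1) := ⟨_, rfl⟩
  rw [← ha]
  have ha0 : 0 < a := ha ▸ by positivity
  have ha1 : a⁻¹ < 1 := inv_lt_one_of_one_lt₀ (by linarith [k.cast_nonneg (α := ℝ)])
  have hiter (n : ℕ) :
      ∀ r, r₀ ≤ r → r < r₁ → f r ≤ F * 2⁻¹ ^ n + 3 * a ^ k * D / (r₁ - r) ^ k := by
    induction n with
    | zero =>
      intro r h0 h1
      have : 0 < r₁ - r := sub_pos.2 h1
      rw [pow_zero, mul_one]
      exact (hF r h0 h1).trans (le_add_of_nonneg_right (by positivity))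
    | succ n ih =>
      intro r h0 h1
      have hd : 0 < r₁ - r := sub_pos.2 h1
      have hrs : r < r + a⁻¹ * (r₁ - r) := lt_add_of_pos_right _ (by positivity)
      have hsr₁ : r₁ - (r + a⁻¹ * (r₁ - r)) = (1 - a⁻¹) * (r₁ - r) := by ring
      have hs1 : r + a⁻¹ * (r₁ - r) < r₁ :=
        sub_pos.1 (hsr₁ ▸ mul_pos (sub_pos.2 ha1) hd)
      have hstep := hf r _ h0 hrs hs1
      have hrest := ih _ (h0.trans hrs.le) hs1
      rw [add_sub_cancel_left] at hstep
      rw [hsr₁] at hrest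
      rw [pow_succ]
      linarith [half_mul_add_le ha hd hD]
  have hlim : Tendsto (fun n : ℕ => F * (2⁻¹ : ℝ) ^ n + 3 * a ^ k * D / (r₁ - r₀) ^ k) atTop
      (𝓝 (F * 0 + 3 * a ^ k * D / (r₁ - r₀) ^ k)) :=
    ((tendsto_pow_atTop_nhds_zero_of_lt_one (by norm_num) (by norm_num)).const_mul F).add_const _
  rw [mul_zero, zero_add] at hlim
  exact ge_of_tendsto' hlim fun n => hiter n r₀ le_rfl h01

theorem exists_energyDensity_bound : ∃ C : ℝ, 0 ≤ C ∧
    ∀ {κ X : ℝ} {u w b : Fin 3 → E3 → ℝ} {P : E3 → ℝ}, IsDilatedSolution κ u w b P →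
    (∀ j, L2Le (closedBall 0 (3 / 2)) (u j) X) → (∀ j, L2Le (closedBall 0 (3 / 2)) (w j) X) →
    (∀ j, L2Le (closedBall 0 (3 / 2)) (b j) X) →
    ∫ x in closedBall (0 : E3) 1, energyDensity κ u w b x ≤ C * (X ^ 2 + X ^ 6) := by
  obtain ⟨C, hC, hstep⟩ := exists_holeFilling_step
  refine ⟨3 * (4 * (8 + 1)) ^ 8 * C / (3 / 2 - 1) ^ 8, by positivity, ?_⟩
  intro κ X u w b P hs hu hw hb
  have hball {r : ℝ} (hr : r < 3 / 2) : closedBall (0 : E3) r ⊆ closedBall 0 (3 / 2) :=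
    closedBall_subset_closedBall hr.le
  have hpos {Y : ℝ} (hXY : X < Y) : ∫ x in closedBall (0 : E3) 1, energyDensity κ u w b x ≤
      3 * (4 * (8 + 1)) ^ 8 * C / (3 / 2 - 1) ^ 8 * (Y ^ 2 + Y ^ 6) := by
    have hY : 0 < Y := (hu 0).nonneg.trans_lt hXY
    have hrestrict {v : Fin 3 → E3 → ℝ} {r : ℝ} (hr : r < 3 / 2)
        (hv : ∀ j, L2Le (closedBall 0 (3 / 2)) (v j) X) (j : Fin 3) :
        L2Le (closedBall 0 r) (v j) Y :=
      ((hv j).mono hXY.le).mono_set (isCompact_closedBall _ _) (hball hr)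
    refine (le_of_le_half_add (k := 8) (D := C * (Y ^ 2 + Y ^ 6))
      (f := fun r => ∫ x in closedBall (0 : E3) r, energyDensity κ u w b x) (by positivity)
      (by norm_num) (fun r _ hr => setIntegral_mono_set_of_isCompact (isCompact_closedBall _ _)
        hs.continuous_energyDensity energyDensity_nonneg (hball hr))
      fun r s hr hrs hs' => hstep hs hY hr hrs (by linarith) (hrestrict hs' hu) (hrestrict hs' hw)
        (hrestrict hs' hb)).trans_eq ?_
    push_cast
    ring
  have hlim : Tendsto (fun Y : ℝ => 3 * (4 * (8 + 1)) ^ 8 * C / (3 / 2 - 1) ^ 8 * (Y ^ 2 + Y ^ 6))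
      (𝓝[>] X) (𝓝 (3 * (4 * (8 + 1)) ^ 8 * C / (3 / 2 - 1) ^ 8 * (X ^ 2 + X ^ 6))) :=
    (Continuous.tendsto (by fun_prop) X).mono_left nhdsWithin_le_nhds
  exact ge_of_tendsto hlim (eventually_mem_nhdsWithin.mono fun Y hY => hpos hY)

end HoleFilling

section Dilation

variable {κ : ℝ} {v z : E3 → E3}

/-- The components of the dilated field `x ↦ κ v(κ x)`, which preserves the scaling of the
convective terms. -/
def dilate (κ : ℝ) (v : E3 → E3) (j : Fin 3) (x : E3) : ℝ := κ * v (κ • x) j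

theorem pd_comp_smul {f : E3 → ℝ} (i : Fin 3) (hf : Differentiable ℝ f) (κ : ℝ) (x : E3) :
    pd i (fun y => f (κ • y)) x = κ * pd i f (κ • x) := by
  simpa only [add_zero] using pd_comp_affine i hf κ 0 x

@[fun_prop]
theorem contDiff_dilate (hv : ContDiff ℝ ∞ v) (κ : ℝ) (j : Fin 3) :
    ContDiff ℝ ∞ (dilate κ v j) := by
  unfold dilate
  fun_prop

theorem pd_dilate (hv : ContDiff ℝ ∞ v) (i j : Fin 3) (x : E3) :
    pd i (dilate κ v j) x = κ ^ 2 * pd i (fun y => v y j) (κ • x) := by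
  rw [show dilate κ v j = fun y => κ * (fun y => v y j) (κ • y) from rfl,
    pd_const_mul i κ (by fun_prop), pd_comp_smul (f := fun y => v y j) i (by fun_prop)]
  ring

theorem lap_dilate (hv : ContDiff ℝ ∞ v) (j : Fin 3) (x : E3) :
    lap (dilate κ v j) x = κ ^ 3 * lap (fun y => v y j) (κ • x) := by
  simp only [lap, pd_dilate hv, Finset.mul_sum]
  refine Finset.sum_congr rfl fun i _ => ?_
  rw [pd_const_mul i (κ ^ 2) (by fun_prop), pd_comp_smul i (by fun_prop)]
  ring

theorem curlField_dilate (hv : ContDiff ℝ ∞ v) (j : Fin 3) (x : E3) :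
    curlField (dilate κ v) j x = κ ^ 2 * curl3 v (κ • x) j := by
  simp only [curlField, pd_dilate hv, ← mul_sub]
  fin_cases j <;> rfl

theorem advect_dilate (hz : ContDiff ℝ ∞ z) (j : Fin 3) (x : E3) :
    advect (dilate κ v) (dilate κ z j) x =
      κ ^ 3 * ∑ i, v (κ • x) i * pd i (fun y => z y j) (κ • x) := by
  simp only [advect, pd_dilate hz, dilate, Finset.mul_sum]
  exact Finset.sum_congr rfl fun i _ => by ring

theorem divField_dilate (hv : ContDiff ℝ ∞ v) (x : E3) :
    divField (dilate κ v) x = κ ^ 2 * vdiv v (κ • x) := by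
  simp only [divField, vdiv, pd_dilate hv, Finset.mul_sum]

theorem pd_divField_dilate (hv : ContDiff ℝ ∞ v) (j : Fin 3) (x : E3) :
    pd j (divField (dilate κ v)) x = κ ^ 3 * pd j (fun y => vdiv v y) (κ • x) := by
  have hdiv : ContDiff ℝ ∞ (vdiv v) := by
    unfold vdiv
    fun_prop
  rw [show divField (dilate κ v) = fun y => κ ^ 2 * vdiv v (κ • y) from
    funext (divField_dilate hv), pd_const_mul j (κ ^ 2) (by fun_prop), pd_comp_smul j (by fun_prop)]
  ring

theorem gradEnergy_dilate (hv : ContDiff ℝ ∞ v) (x : E3) :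
    gradEnergy (dilate κ v) x = κ ^ 4 * gradSq v (κ • x) := by
  rw [gradEnergy, Finset.sum_comm]
  simp only [gradSq, pd_dilate hv, Finset.mul_sum, mul_pow, ← pow_mul]

theorem IsMMPSolution.isDilatedSolution {u w b : E3 → E3} {P : E3 → ℝ}
    (h : IsMMPSolution u w b P) (κ : ℝ) :
    IsDilatedSolution κ (dilate κ u) (dilate κ w) (dilate κ b) (fun x => κ ^ 2 * P (κ • x)) := by
  have hu := h.smooth_u
  have hw := h.smooth_w
  have hb := h.smooth_b
  have hP := h.smooth_P
  refine ⟨by fun_prop, by fun_prop, by fun_prop, by fun_prop, fun x j => ?_, fun x j => ?_,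
    fun x j => ?_, fun x => ?_, fun x => ?_⟩
  · rw [pd_const_mul j (κ ^ 2) (by fun_prop), pd_comp_smul j (by fun_prop), lap_dilate hu,
      advect_dilate hu, advect_dilate hb, curlField_dilate hw]
    linear_combination κ ^ 3 * h.eq_u (κ • x) j
  · rw [lap_dilate hw, advect_dilate hw, curlField_dilate hu, pd_divField_dilate hw, dilate]
    linear_combination (-κ ^ 3) * h.eq_w (κ • x) j
  · rw [lap_dilate hb, advect_dilate hb, advect_dilate hu]
    linear_combination (-κ ^ 3) * h.eq_b (κ • x) j
  · rw [divField_dilate hu, h.div_u, mul_zero]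
  · rw [divField_dilate hb, h.div_b, mul_zero]

theorem setIntegral_closedBall_comp_smul (f : E3 → ℝ) {R ρ : ℝ} (hR : 0 < R) (hρ : 0 ≤ ρ) :
    ∫ x in closedBall (0 : E3) ρ, f (R • x) =
      (R ^ 3)⁻¹ * ∫ x in closedBall (0 : E3) (R * ρ), f x := by
  rw [Measure.setIntegral_comp_smul_of_pos volume f _ hR, smul_closedBall _ _ hρ, smul_zero,
    norm_of_nonneg hR.le, finrank_euclideanSpace_fin, smul_eq_mul]

end Dilation

section LpNorm

theorem integral_norm_sq_le {α F : Type*} [MeasurableSpace α] [NormedAddCommGroup F]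
    {μ : Measure α} [IsFiniteMeasure μ] {f : α → F} {p : ℝ} (hp : 2 ≤ p)
    (hf : MemLp f (ENNReal.ofReal p) μ) :
    ∫ x, ‖f x‖ ^ 2 ∂μ ≤ μ.real Set.univ ^ (1 - 2 / p) * ((∫ x, ‖f x‖ ^ p ∂μ) ^ (1 / p)) ^ 2 := by
  have hp0 : 0 < p := by linarith
  have hp2 : (2 : ℝ≥0∞) ≤ ENNReal.ofReal p := by
    simpa only [ENNReal.ofReal_ofNat] using ENNReal.ofReal_le_ofReal hp
  have hexp : 0 ≤ 1 / 2 - 1 / p := sub_nonneg.2 (one_div_le_one_div_of_le two_pos hp)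
  have hpnorm : lpNorm f (ENNReal.ofReal p) μ = (∫ x, ‖f x‖ ^ p ∂μ) ^ (1 / p) := by
    rw [lpNorm_eq_integral_norm_rpow_toReal (by simpa using hp0) ENNReal.ofReal_ne_top hf.1,
      ENNReal.toReal_ofReal hp0.le, one_div]
  have hsqnorm : lpNorm f 2 μ ^ 2 = ∫ x, ‖f x‖ ^ 2 ∂μ := by
    rw [lpNorm_eq_integral_norm_rpow_toReal two_ne_zero ENNReal.ofNat_ne_top hf.1,
      ENNReal.toReal_ofNat, ← rpow_two, rpow_inv_rpow (integral_nonneg fun _ => by positivity)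
        two_ne_zero]
    simp only [rpow_two]
  have hle : lpNorm f 2 μ ≤ lpNorm f (ENNReal.ofReal p) μ * μ.real Set.univ ^ (1 / 2 - 1 / p) := by
    have h := ENNReal.toReal_mono (ENNReal.mul_ne_top hf.eLpNorm_ne_top
      (ENNReal.rpow_ne_top_of_nonneg (by simpa [hp0.le] using hexp) (measure_ne_top μ Set.univ)))
      (eLpNorm_le_eLpNorm_mul_rpow_measure_univ hp2 hf.1)
    rwa [ENNReal.toReal_mul, ← ENNReal.toReal_rpow, toReal_eLpNorm hf.1, toReal_eLpNorm hf.1,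
      ENNReal.toReal_ofNat, ENNReal.toReal_ofReal hp0.le] at h
  calc ∫ x, ‖f x‖ ^ 2 ∂μ = lpNorm f 2 μ ^ 2 := hsqnorm.symm
    _ ≤ (lpNorm f (ENNReal.ofReal p) μ * μ.real Set.univ ^ (1 / 2 - 1 / p)) ^ 2 :=
        pow_le_pow_left₀ lpNorm_nonneg hle 2
    _ = _ := by
      rw [hpnorm, mul_pow, ← rpow_mul_natCast measureReal_nonneg, mul_comm]
      congr 2
      push_cast
      ring

theorem lpnorm_nonneg (p : ℝ) (v : E3 → E3) (S : Set E3) : 0 ≤ lpnorm p v S :=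
  rpow_nonneg (integral_nonneg fun _ => rpow_nonneg (norm_nonneg _) _) _

theorem volume_real_ball3_le {r : ℝ} (hr : 0 ≤ r) : volume.real (ball3 r) ≤ 5 * r ^ 3 := by
  rw [measureReal_def, ball3, EuclideanSpace.volume_ball_fin_three, ENNReal.toReal_mul,
    ENNReal.toReal_pow, ENNReal.toReal_ofReal hr, ENNReal.toReal_ofReal (by positivity), mul_comm]
  gcongr
  linarith [pi_lt_d2]

theorem setIntegral_norm_sq_le_lpnorm {p R : ℝ} {v : E3 → E3} (hp : 2 ≤ p) (hv : Continuous v)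
    (hR : 0 < R) :
    ∫ x in ball3 (2 * R), ‖v x‖ ^ 2 ≤ 40 * (R ^ (3 - 6 / p) * lpnorm p v (ball3 (2 * R)) ^ 2) := by
  have hp0 : 0 < p := by linarith
  have : IsFiniteMeasure (volume.restrict (ball3 (2 * R))) :=
    isFiniteMeasure_restrict.2 measure_ball_lt_top.ne
  have hLp : MemLp v (ENNReal.ofReal p) (volume.restrict (ball3 (2 * R))) := by
    obtain ⟨C, hC⟩ :=
      (isCompact_closedBall (0 : E3) (2 * R)).exists_bound_of_continuousOn hv.continuousOn
    exact .of_bound hv.aestronglyMeasurable C <|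
      ae_restrict_of_forall_mem measurableSet_ball fun x hx => hC x (ball_subset_closedBall hx)
  have hexp : 0 ≤ 1 - 2 / p := sub_nonneg.2 ((div_le_one hp0).2 hp)
  have hvolume : volume.real (ball3 (2 * R)) ^ (1 - 2 / p) ≤ 40 * R ^ (3 - 6 / p) := by
    calc volume.real (ball3 (2 * R)) ^ (1 - 2 / p) ≤ (40 * R ^ 3) ^ (1 - 2 / p) := by
          refine rpow_le_rpow measureReal_nonneg ?_ hexp
          exact (volume_real_ball3_le (by positivity)).trans_eq (by ring)
      _ = 40 ^ (1 - 2 / p) * R ^ (3 - 6 / p) := by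
          rw [mul_rpow (by norm_num) (by positivity), ← rpow_natCast_mul hR.le]
          congr 2
          push_cast
          ring
      _ ≤ 40 * R ^ (3 - 6 / p) := by
          gcongr
          exact rpow_le_self_of_one_le (by norm_num) (sub_le_self _ (by positivity))
  refine (integral_norm_sq_le hp hLp).trans ?_
  rw [measureReal_restrict_apply_univ, ← mul_assoc, ← lpnorm]
  gcongr

theorem l2Le_dilate {p R : ℝ} {v : E3 → E3} (hp : 2 ≤ p) (hv : Continuous v) (hR : 0 < R)
    (j : Fin 3) :
    L2Le (closedBall 0 (3 / 2)) (dilate R v j)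
      (7 * (R ^ (1 - 3 / p) * lpnorm p v (ball3 (2 * R)))) := by
  have hn := lpnorm_nonneg p v (ball3 (2 * R))
  set n := lpnorm p v (ball3 (2 * R))
  have hR2 : R⁻¹ * R ^ (3 - 6 / p) = (R ^ (1 - 3 / p)) ^ 2 := by
    rw [← rpow_neg_one, ← rpow_add hR, ← rpow_mul_natCast hR.le]
    congr 1
    push_cast
    ring
  refine ⟨isCompact_closedBall _ _, by unfold dilate; fun_prop, by positivity, ?_⟩
  have hint : IntegrableOn (fun x => ‖v x‖ ^ 2) (closedBall 0 (2 * R)) :=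
    integrableOn_of_isCompact (isCompact_closedBall _ _) (by fun_prop)
  have hcoord (x : E3) : v x j ^ 2 ≤ ‖v x‖ ^ 2 := sq_le_sq.2 <| by
    simpa only [abs_norm] using abs_coord_le_norm (v x) j
  calc ∫ x in closedBall (0 : E3) (3 / 2), dilate R v j x ^ 2
      = R⁻¹ * ∫ x in closedBall (0 : E3) (R * (3 / 2)), v x j ^ 2 := by
        simp only [dilate, mul_pow]
        rw [integral_const_mul,
          setIntegral_closedBall_comp_smul (fun x => v x j ^ 2) hR (by norm_num)]
        field_simp
    _ ≤ R⁻¹ * ∫ x in ball3 (2 * R), ‖v x‖ ^ 2 :=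
        mul_le_mul_of_nonneg_left ((setIntegral_mono_of_isCompact (isCompact_closedBall _ _)
          (by fun_prop) (by fun_prop) fun x _ => hcoord x).trans
          (setIntegral_mono_set (hint.mono_set ball_subset_closedBall)
            (.of_forall fun _ => by positivity)
            (closedBall_subset_ball (by linarith)).eventuallyLE))
          (by positivity)
    _ ≤ R⁻¹ * (40 * (R ^ (3 - 6 / p) * n ^ 2)) := by
        gcongr
        exact setIntegral_norm_sq_le_lpnorm hp hv hR
    _ = 40 * ((R ^ (1 - 3 / p)) ^ 2 * n ^ 2) := by
        rw [← hR2]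
        ring
    _ ≤ 49 * ((R ^ (1 - 3 / p)) ^ 2 * n ^ 2) := by
        gcongr
        norm_num
    _ = _ := by ring

end LpNorm

section DirichletEstimate

@[fun_prop]
theorem continuous_gradSq {v : E3 → E3} (hv : ContDiff ℝ ∞ v) : Continuous (gradSq v) := by
  unfold gradSq
  fun_prop

theorem gradSq_nonneg (v : E3 → E3) (x : E3) : 0 ≤ gradSq v x := by
  unfold gradSq
  positivity

theorem IsMMPSolution.setIntegral_gradSq_le {u w b : E3 → E3} {P : E3 → ℝ}
    (h : IsMMPSolution u w b P) {R : ℝ} (hR : 0 < R) :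
    ∫ x in ball3 (R / 2), (gradSq u x + gradSq b x + gradSq w x) ≤
      R⁻¹ * ∫ x in closedBall (0 : E3) 1,
        energyDensity R (dilate R u) (dilate R w) (dilate R b) x := by
  have hu := h.smooth_u
  have hw := h.smooth_w
  have hb := h.smooth_b
  have hdensity (x : E3) : R ^ 4 * (gradSq u (R • x) + gradSq b (R • x) + gradSq w (R • x)) ≤
      energyDensity R (dilate R u) (dilate R w) (dilate R b) x := by
    have hw0 : 0 ≤ ∑ j, (R * dilate R w j x) ^ 2 := by positivity
    rw [energyDensity, gradEnergy_dilate hu, gradEnergy_dilate hw, gradEnergy_dilate hb]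
    linarith
  calc ∫ x in ball3 (R / 2), (gradSq u x + gradSq b x + gradSq w x)
      ≤ ∫ x in closedBall (0 : E3) (R * 1), (gradSq u x + gradSq b x + gradSq w x) :=
        setIntegral_mono_set_of_isCompact (isCompact_closedBall _ _) (by fun_prop)
          (fun x => add_nonneg (add_nonneg (gradSq_nonneg u x) (gradSq_nonneg b x))
            (gradSq_nonneg w x))
          (ball_subset_closedBall.trans (closedBall_subset_closedBall (by linarith)))
    _ = R⁻¹ * ∫ x in closedBall (0 : E3) 1,
          R ^ 4 * (gradSq u (R • x) + gradSq b (R • x) + gradSq w (R • x)) := by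
        rw [integral_const_mul, setIntegral_closedBall_comp_smul
          (fun x => gradSq u x + gradSq b x + gradSq w x) hR zero_le_one]
        field_simp
    _ ≤ _ := mul_le_mul_of_nonneg_left (setIntegral_mono_of_isCompact (isCompact_closedBall _ _)
        (by fun_prop) (h.isDilatedSolution R).continuous_energyDensity fun x _ => hdensity x)
        (by positivity)

theorem inv_mul_rpow_pow {R : ℝ} (hR : 0 < R) (a : ℝ) (n : ℕ) :
    R⁻¹ * (R ^ a) ^ n = R ^ (n * a - 1) := by
  rw [← rpow_mul_natCast hR.le, rpow_sub_one hR.ne', mul_comm a, div_eq_inv_mul]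

theorem dirichlet_estimate_low_p_general :
    ∃ C : ℝ, 0 < C ∧
      ∀ p : ℝ, 2 ≤ p → ∀ u w b : E3 → E3, ∀ P : E3 → ℝ, IsMMPSolution u w b P →
      ∀ R : ℝ, 0 < R →
        (∫ x in ball3 (R / 2), (gradSq u x + gradSq b x + gradSq w x)) ≤
          C * (R ^ (1 - 6 / p) *
                (lpnorm p u (ball3 (2 * R)) + lpnorm p b (ball3 (2 * R))
                  + lpnorm p w (ball3 (2 * R))) ^ 2
              + R ^ (5 - 18 / p) *
                (lpnorm p u (ball3 (2 * R)) + lpnorm p b (ball3 (2 * R))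
                  + lpnorm p w (ball3 (2 * R))) ^ 6) := by
  obtain ⟨C, hC, hE⟩ := exists_energyDensity_bound
  refine ⟨C * 7 ^ 6 + 1, by positivity, fun p hp u w b P h R hR => ?_⟩
  have hu := lpnorm_nonneg p u (ball3 (2 * R))
  have hw := lpnorm_nonneg p w (ball3 (2 * R))
  have hb := lpnorm_nonneg p b (ball3 (2 * R))
  set N := lpnorm p u (ball3 (2 * R)) + lpnorm p b (ball3 (2 * R)) + lpnorm p w (ball3 (2 * R))
  have hL2 {v : E3 → E3} (hv : ContDiff ℝ ∞ v) (hvN : lpnorm p v (ball3 (2 * R)) ≤ N)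
      (j : Fin 3) : L2Le (closedBall 0 (3 / 2)) (dilate R v j) (7 * (R ^ (1 - 3 / p) * N)) :=
    (l2Le_dilate hp hv.continuous hR j).mono (by gcongr)
  have hunit := hE (h.isDilatedSolution R) (hL2 h.smooth_u (by linarith))
    (hL2 h.smooth_w (by linarith)) (hL2 h.smooth_b (by linarith))
  calc _ ≤ R⁻¹ * (C * ((7 * (R ^ (1 - 3 / p) * N)) ^ 2 + (7 * (R ^ (1 - 3 / p) * N)) ^ 6)) :=
        (h.setIntegral_gradSq_le hR).trans (by gcongr)
    _ = C * (7 ^ 2 * (R⁻¹ * (R ^ (1 - 3 / p)) ^ 2 * N ^ 2)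
          + 7 ^ 6 * (R⁻¹ * (R ^ (1 - 3 / p)) ^ 6 * N ^ 6)) := by ring
    _ = C * (7 ^ 2 * (R ^ (1 - 6 / p) * N ^ 2) + 7 ^ 6 * (R ^ (5 - 18 / p) * N ^ 6)) := by
        rw [inv_mul_rpow_pow hR, inv_mul_rpow_pow hR]
        ring_nf
    _ ≤ C * (7 ^ 6 * (R ^ (1 - 6 / p) * N ^ 2) + 7 ^ 6 * (R ^ (5 - 18 / p) * N ^ 6)) := by
        gcongr <;> norm_num
    _ = C * 7 ^ 6 * (R ^ (1 - 6 / p) * N ^ 2 + R ^ (5 - 18 / p) * N ^ 6) := by ring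
    _ ≤ _ := by
        gcongr
        linarith

/-- Dirichlet integral estimate for `p ∈ [2, 18/5)`. -/
theorem dirichlet_estimate_low_p
    (p : ℝ) (hp1 : 2 ≤ p) (hp2 : p < 18 / 5) :
    ∃ C : ℝ, 0 < C ∧
      ∀ u w b : E3 → E3, ∀ P : E3 → ℝ, IsMMPSolution u w b P →
      ∀ R : ℝ, 2 < R →
        (∫ x in ball3 (R / 2), (gradSq u x + gradSq b x + gradSq w x)) ≤
          C * (R ^ (1 - 6 / p) *
                (lpnorm p u (ball3 (2 * R)) + lpnorm p b (ball3 (2 * R))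
                  + lpnorm p w (ball3 (2 * R))) ^ 2
              + R ^ (5 - 18 / p) *
                (lpnorm p u (ball3 (2 * R)) + lpnorm p b (ball3 (2 * R))
                  + lpnorm p w (ball3 (2 * R))) ^ 6
              + R ^ (2 - 9 / p) *
                (lpnorm p u (ball3 (2 * R)) + lpnorm p b (ball3 (2 * R))
                  + lpnorm p w (ball3 (2 * R))) ^ 3) := by
  obtain ⟨C, hC, h⟩ := dirichlet_estimate_low_p_general
  refine ⟨C, hC, fun u w b P hs R hR => (h p hp1 u w b P hs R (by linarith)).trans ?_⟩
  have := lpnorm_nonneg p u (ball3 (2 * R))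
  have := lpnorm_nonneg p w (ball3 (2 * R))
  have := lpnorm_nonneg p b (ball3 (2 * R))
  exact mul_le_mul_of_nonneg_left (le_add_of_nonneg_right (by positivity)) hC.le
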